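/- arXiv:2409.10948 — 4 statements merged into one kernel-verified Lean document; each statement's English description precedes it below -/
import Mathlib

section
/- Let τ ≥ 0, let m and l be nonnegative integers with l < m+1 (i.e. l ≤ m), and let f : ℂ → ℂ be an entire function of exponential type τ such that f(z) = ∑_{j=0}^∞ a_j z^{2m+1+2j} for all z ∈ ℂ, where a_0 ≠ 0, and such that the restriction of f to [0,∞) is real-valued and absolutely integrable, i.e. ∫_0^∞ |f(x)| dx < ∞. Then for every real λ > τ, the Hankel transform vanishes: ∫_0^∞ f(x) J_{2l}(λx) dx = 0. -/
open MeasureTheory Real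

/-- Bessel function of the first kind of nonnegative integer order `n`. -/
noncomputable def besselJ (n : ℕ) (x : ℝ) : ℝ :=
  ∑' k : ℕ, (-1 : ℝ) ^ k / (Nat.factorial k * Nat.factorial (n + k)) * (x / 2) ^ (n + 2 * k)

/-- `f` is an entire function of exponential type `τ`. -/
def ExpType (τ : ℝ) (f : ℂ → ℂ) : Prop :=
  Differentiable ℂ f ∧
    ∀ ε > 0, ∃ C > 0, ∀ z : ℂ, ‖f z‖ ≤ C * Real.exp ((τ + ε) * ‖z‖)

/-!
Let `F` be the Laplace transform of `f` along `[0, ∞)` and `B s = ∑ f⁽ⁿ⁾(0) / s ^ (n + 1)` its Borel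
transform, so that `F = B` wherever `0 ≤ re s` and `τ < ‖s‖`. If `f (-z) = (-1) ^ (k + 1) f z` and
`f` vanishes to order `k` at `0`, then `B (-s) = (-1) ^ k B s` and `B s = O(‖s‖ ^ (-k - 1))`.

By Bessel's integral and Fubini, `2 π ∫ f x J_k(lam x) dx` is the integral of
`H ζ = F (lam sinh ζ) (exp (k ζ) + (-1) ^ k exp (-k ζ))` over the segment from `-π i / 2` to
`π i / 2`. Push this segment to the right through the half-strip `|im ζ| ≤ π / 2`. On the horizontal
edges `‖lam sinh ζ‖ = lam cosh (re ζ) > τ`, so there `F = B` and by parity `H` takes equal values on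
the two edges; on the far edge the decay of `B` leaves `H ζ = O(1 / ‖sinh ζ‖)`.
-/

open Set Filter Topology

section PowerSeries

theorem natCast_le_analyticOrderAt_of_hasSum {ι : Type*} {n : ℕ} {e : ι → ℕ}
    (hn : ∀ j, n ≤ e j) {a : ι → ℂ} {f : ℂ → ℂ} (hf : ∀ z, HasSum (fun j => a j * z ^ e j) (f z)) :
    n ≤ analyticOrderAt f 0 := by
  let g (z : ℂ) : ℂ := ∑' j, a j * z ^ (e j - n)
  have hsum : Summable fun j => ‖a j‖ := by simpa using (hf 1).summable.norm
  have hball : IsOpen (Metric.ball (0 : ℂ) 1) := Metric.isOpen_ball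
  have hg : DifferentiableOn ℂ g (Metric.ball 0 1) := by
    refine Complex.differentiableOn_tsum_of_summable_norm hsum (fun j => by fun_prop) hball
      fun j z hz => ?_
    rw [norm_mul, norm_pow]
    exact mul_le_of_le_one_right (norm_nonneg _)
      (pow_le_one₀ (norm_nonneg _) (mem_ball_zero_iff.1 hz).le)
  have hfactor (z : ℂ) : f z = z ^ n * g z := by
    rw [← (hf z).tsum_eq, ← tsum_mul_left]
    refine tsum_congr fun j => ?_
    rw [mul_left_comm, ← pow_add, Nat.add_sub_cancel' (hn j)]
  have hg0 : AnalyticAt ℂ g 0 := hg.analyticAt (Metric.ball_mem_nhds 0 one_pos)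
  have hf0 : AnalyticAt ℂ f 0 := funext hfactor ▸ (analyticAt_id.pow n).mul hg0
  refine (natCast_le_analyticOrderAt hf0).2 ⟨g, hg0, Eventually.of_forall fun z => ?_⟩
  rw [sub_zero, smul_eq_mul, hfactor]

end PowerSeries

section Borel

theorem integral_pow_mul_exp_neg_mul_Ioi (n : ℕ) {s : ℝ} (hs : 0 < s) :
    ∫ x in Ioi (0 : ℝ), x ^ n * exp (-(s * x)) = n.factorial / s ^ (n + 1) := by
  have h := Real.integral_rpow_mul_exp_neg_mul_Ioi (a := n + 1) (by positivity) hs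
  simp only [add_sub_cancel_right, rpow_natCast, Gamma_nat_eq_factorial] at h
  rw [h, ← Nat.cast_add_one, rpow_natCast, one_div, inv_pow, inv_mul_eq_div]

theorem integrableOn_pow_mul_exp_neg_mul_Ioi (n : ℕ) {s : ℝ} (hs : 0 < s) :
    IntegrableOn (fun x : ℝ => x ^ n * exp (-(s * x))) (Ioi 0) := by
  refine Integrable.of_integral_ne_zero ?_
  rw [integral_pow_mul_exp_neg_mul_Ioi n hs]
  positivity

variable {τ : ℝ} {f : ℂ → ℂ}

/-- The Borel transform `∑ f⁽ⁿ⁾(0) / s ^ (n + 1)` of an entire function `f`. For `f` of exponential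
type `τ` it converges on `τ < ‖s‖` and continues the Laplace transform of `f` there. -/
noncomputable def borelTransform (f : ℂ → ℂ) (s : ℂ) : ℂ :=
  ∑' n : ℕ, iteratedDeriv n f 0 / s ^ (n + 1)

theorem borelTransform_neg {c : ℂ} (hc : ∀ z, f (-z) = c * f z) (s : ℂ) :
    borelTransform f (-s) = -c * borelTransform f s := by
  have hderiv (n : ℕ) : (-1) ^ n * iteratedDeriv n f 0 = c * iteratedDeriv n f 0 := by
    have h := iteratedDeriv_comp_neg n f 0
    rw [funext hc, iteratedDeriv_const_mul_field, neg_zero, smul_eq_mul] at h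
    exact h.symm
  rw [borelTransform, borelTransform, ← tsum_mul_left]
  refine tsum_congr fun n => ?_
  rw [neg_mul, ← mul_div_assoc, ← hderiv n, neg_pow s, pow_succ (-1)]
  rcases neg_one_pow_eq_or ℂ n with hn | hn <;> simp [hn, div_neg, neg_div]

theorem norm_iteratedDeriv_mul_pow_le {ρ C : ℝ} (hf : Differentiable ℂ f)
    (hC : ∀ z, ‖f z‖ ≤ C * exp (ρ * ‖z‖)) (n : ℕ) {x : ℝ} (hx : 0 < x) :
    ‖iteratedDeriv n f 0‖ * x ^ n ≤ n.factorial * (C * exp (ρ * x)) := by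
  rw [← le_div_iff₀ (pow_pos hx n)]
  refine Complex.norm_iteratedDeriv_le_of_forall_mem_sphere_norm_le n hx hf.diffContOnCl
    fun z hz => ?_
  rw [← mem_sphere_zero_iff_norm.1 hz]
  exact hC z

/-- Integrating Cauchy's estimate on the circle of radius `x` against `exp (-μ x)` over `x > 0`,
where optimizing the radius would require Stirling's formula. -/
theorem ExpType.exists_norm_iteratedDeriv_le (hτ : 0 ≤ τ) (hf : ExpType τ f) {μ : ℝ} (hμ : τ < μ) :
    ∃ C, ∀ n, ‖iteratedDeriv n f 0‖ ≤ C * μ ^ n := by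
  obtain ⟨ρ, hτρ, hρμ⟩ := exists_between hμ
  obtain ⟨C, -, hfC⟩ := hf.2 (ρ - τ) (sub_pos.2 hτρ)
  rw [add_sub_cancel] at hfC
  have hμ0 : 0 < μ := hτ.trans_lt hμ
  have hδ : 0 < μ - ρ := sub_pos.2 hρμ
  refine ⟨C / (μ - ρ) * μ, fun n => ?_⟩
  have hmono : ∫ x in Ioi (0 : ℝ), ‖iteratedDeriv n f 0‖ * (x ^ n * exp (-(μ * x))) ≤
      ∫ x in Ioi (0 : ℝ), n.factorial * C * (x ^ 0 * exp (-((μ - ρ) * x))) := by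
    refine setIntegral_mono_on ((integrableOn_pow_mul_exp_neg_mul_Ioi n hμ0).const_mul _)
      ((integrableOn_pow_mul_exp_neg_mul_Ioi 0 hδ).const_mul _) measurableSet_Ioi fun x hx => ?_
    calc ‖iteratedDeriv n f 0‖ * (x ^ n * exp (-(μ * x)))
        = ‖iteratedDeriv n f 0‖ * x ^ n * exp (-(μ * x)) := by ring
      _ ≤ n.factorial * (C * exp (ρ * x)) * exp (-(μ * x)) := by 
        gcongr ?_ * _
        exact norm_iteratedDeriv_mul_pow_le hf.1 hfC n hx
      _ = n.factorial * C * (x ^ 0 * exp (-((μ - ρ) * x))) := by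
        rw [show -((μ - ρ) * x) = ρ * x + -(μ * x) by ring, exp_add]
        ring
  rw [integral_const_mul, integral_const_mul, integral_pow_mul_exp_neg_mul_Ioi n hμ0,
    integral_pow_mul_exp_neg_mul_Ioi 0 hδ] at hmono
  have hfact : (0 : ℝ) < n.factorial := by positivity
  field_simp at hmono ⊢
  linear_combination hmono

theorem ExpType.summable_norm_iteratedDeriv_div_pow (hτ : 0 ≤ τ) (hf : ExpType τ f) {σ : ℝ}
    (hσ : τ < σ) : Summable fun n : ℕ => ‖iteratedDeriv n f 0‖ / σ ^ (n + 1) := by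
  obtain ⟨μ, hτμ, hμσ⟩ := exists_between hσ
  obtain ⟨C, hC⟩ := hf.exists_norm_iteratedDeriv_le hτ hτμ
  have hμ0 : 0 ≤ μ := hτ.trans hτμ.le
  have hσ0 : 0 < σ := hτ.trans_lt hσ
  have hgeom : Summable fun n : ℕ => C / σ * (μ / σ) ^ n :=
    (summable_geometric_of_lt_one (by positivity) ((div_lt_one hσ0).2 hμσ)).mul_left _
  refine hgeom.of_nonneg_of_le (fun n => by positivity) fun n => ?_
  calc ‖iteratedDeriv n f 0‖ / σ ^ (n + 1) ≤ C * μ ^ n / σ ^ (n + 1) := by gcongr; exact hC n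
    _ = C / σ * (μ / σ) ^ n := by rw [div_pow, pow_succ]; field_simp

theorem ExpType.differentiableOn_borelTransform (hτ : 0 ≤ τ) (hf : ExpType τ f) :
    DifferentiableOn ℂ (borelTransform f) {s | τ < ‖s‖} := by
  intro s hs
  obtain ⟨σ, hτσ, hσs⟩ := exists_between (show τ < ‖s‖ from hs)
  have hσ0 : 0 < σ := hτ.trans_lt hτσ
  have hopen : IsOpen {s : ℂ | σ < ‖s‖} := isOpen_lt continuous_const continuous_norm
  have hdiff : DifferentiableOn ℂ (borelTransform f) {s | σ < ‖s‖} := by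
    refine Complex.differentiableOn_tsum_of_summable_norm
      (hf.summable_norm_iteratedDeriv_div_pow hτ hτσ) (fun n z hz => ?_) hopen fun n z hz => ?_
    · have hz0 : z ^ (n + 1) ≠ 0 := pow_ne_zero _ (norm_pos_iff.1 (hσ0.trans hz))
      fun_prop (disch := assumption)
    · rw [norm_div, norm_pow]
      gcongr
      exact le_of_lt hz
  exact (hdiff.differentiableAt (hopen.mem_nhds hσs)).differentiableWithinAt

theorem ExpType.exists_norm_borelTransform_le (hτ : 0 ≤ τ) (hf : ExpType τ f) {k : ℕ}
    (hk : k ≤ analyticOrderAt f 0) {σ : ℝ} (hσ : τ < σ) :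
    ∃ C, 0 ≤ C ∧ ∀ s : ℂ, σ ≤ ‖s‖ → ‖borelTransform f s‖ ≤ C / ‖s‖ ^ (k + 1) := by
  have hσ0 : 0 < σ := hτ.trans_lt hσ
  have hzero : ∀ n < k, iteratedDeriv n f 0 = 0 :=
    (natCast_le_analyticOrderAt_iff_iteratedDeriv_eq_zero (hf.1.analyticAt 0)).1 hk
  have hsum := hf.summable_norm_iteratedDeriv_div_pow hτ hσ
  refine ⟨σ ^ (k + 1) * ∑' n : ℕ, ‖iteratedDeriv n f 0‖ / σ ^ (n + 1),
    by positivity, fun s hs => ?_⟩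
  have hs0 : 0 < ‖s‖ := hσ0.trans_le hs
  rw [mul_div_right_comm]
  refine tsum_of_norm_bounded (hsum.hasSum.mul_left _) fun n => ?_
  rcases lt_or_ge n k with hn | hn
  · simp [hzero n hn]
  obtain ⟨i, rfl⟩ := Nat.exists_eq_add_of_le hn
  calc ‖iteratedDeriv (k + i) f 0 / s ^ (k + i + 1)‖
      = ‖iteratedDeriv (k + i) f 0‖ / (‖s‖ ^ (k + 1) * ‖s‖ ^ i) := by
        rw [norm_div, norm_pow, ← pow_add, add_right_comm]
    _ ≤ ‖iteratedDeriv (k + i) f 0‖ / (‖s‖ ^ (k + 1) * σ ^ i) := by gcongr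
    _ = σ ^ (k + 1) / ‖s‖ ^ (k + 1) * (‖iteratedDeriv (k + i) f 0‖ / σ ^ (k + i + 1)) := by
        rw [add_right_comm, pow_add σ (k + 1) i]
        field_simp

end Borel

section Laplace

variable {g : ℝ → ℂ}

/-- The Laplace transform of `g : [0, ∞) → ℂ`. -/
noncomputable def laplaceTransform (g : ℝ → ℂ) (s : ℂ) : ℂ :=
  ∫ x in Ioi (0 : ℝ), Complex.exp (-(s * x)) * g x

theorem norm_cexp_neg_mul_le_one {s : ℂ} (hs : 0 ≤ s.re) {x : ℝ} (hx : 0 ≤ x) :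
    ‖Complex.exp (-(s * x))‖ ≤ 1 := by
  rw [Complex.norm_exp, exp_le_one_iff, Complex.neg_re, Complex.re_mul_ofReal]
  exact neg_nonpos.2 (mul_nonneg hs hx)

theorem aestronglyMeasurable_cexp_neg_mul_mul (hg : IntegrableOn g (Ioi 0)) (s : ℂ) :
    AEStronglyMeasurable (fun x : ℝ => Complex.exp (-(s * x)) * g x)
      (volume.restrict (Ioi 0)) :=
  Continuous.aestronglyMeasurable (by fun_prop) |>.mul hg.aestronglyMeasurable

theorem ae_norm_cexp_neg_mul_mul_le (g : ℝ → ℂ) {s : ℂ} (hs : 0 ≤ s.re) :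
    ∀ᵐ x : ℝ ∂volume.restrict (Ioi 0), ‖Complex.exp (-(s * x)) * g x‖ ≤ ‖g x‖ := by
  filter_upwards [ae_restrict_mem measurableSet_Ioi] with x hx
  rw [norm_mul]
  exact mul_le_of_le_one_left (norm_nonneg _) (norm_cexp_neg_mul_le_one hs (le_of_lt hx))

theorem continuousOn_laplaceTransform (hg : IntegrableOn g (Ioi 0)) :
    ContinuousOn (laplaceTransform g) {s | 0 ≤ s.re} :=
  continuousOn_of_dominated (fun s _ => aestronglyMeasurable_cexp_neg_mul_mul hg s)
    (fun _ hs => ae_norm_cexp_neg_mul_mul_le g hs) hg.norm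
    (Eventually.of_forall fun x => by fun_prop)

theorem norm_mul_exp_neg_mul_le {s : ℂ} {δ x : ℝ} (hδ : 0 < δ) (hs : δ ≤ s.re) (hx : 0 ≤ x) :
    ‖(-x : ℂ) * Complex.exp (-(s * x))‖ ≤ 1 / δ := by
  have hexp : δ * x ≤ exp (s.re * x) :=
    calc δ * x ≤ s.re * x := by gcongr
      _ ≤ exp (s.re * x) := by linarith [add_one_le_exp (s.re * x)]
  rw [norm_mul, norm_neg, Complex.norm_of_nonneg hx, Complex.norm_exp, Complex.neg_re,
    Complex.re_mul_ofReal, exp_neg, ← div_eq_mul_inv, div_le_div_iff₀ (exp_pos _) hδ]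
  linarith

theorem differentiableOn_laplaceTransform (hg : IntegrableOn g (Ioi 0)) :
    DifferentiableOn ℂ (laplaceTransform g) {s | 0 < s.re} := by
  intro s hs
  have hδ : 0 < s.re / 2 := half_pos hs
  have hnhds : {z : ℂ | s.re / 2 < z.re} ∈ 𝓝 s :=
    (isOpen_lt continuous_const Complex.continuous_re).mem_nhds
      (show s.re / 2 < s.re from half_lt_self hs)
  have hbound : ∀ᵐ x : ℝ ∂volume.restrict (Ioi 0), ∀ z ∈ {z : ℂ | s.re / 2 < z.re},
      ‖-x * Complex.exp (-(z * x)) * g x‖ ≤ 1 / (s.re / 2) * ‖g x‖ := by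
    filter_upwards [ae_restrict_mem measurableSet_Ioi] with x hx z hz
    rw [norm_mul]
    exact mul_le_mul_of_nonneg_right
      (norm_mul_exp_neg_mul_le hδ (le_of_lt hz) (le_of_lt hx)) (norm_nonneg _)
  have hderiv (x : ℝ) (z : ℂ) : HasDerivAt (fun z : ℂ => Complex.exp (-(z * x)) * g x)
      (-x * Complex.exp (-(z * x)) * g x) z := by
    simpa only [mul_comm] using ((hasDerivAt_mul_const (x : ℂ)).fun_neg.cexp.mul_const (g x))
  have hL := hasDerivAt_integral_of_dominated_loc_of_deriv_le hnhds
    (Eventually.of_forall (aestronglyMeasurable_cexp_neg_mul_mul hg))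
    (hg.norm.mono' (aestronglyMeasurable_cexp_neg_mul_mul hg s)
      (ae_norm_cexp_neg_mul_mul_le g (le_of_lt hs)))
    (Continuous.aestronglyMeasurable (by fun_prop) |>.mul hg.aestronglyMeasurable) hbound
    (hg.norm.const_mul _) (Eventually.of_forall fun x z _ => hderiv x z)
  exact hL.2.differentiableAt.differentiableWithinAt

end Laplace

section LaplaceBorel

variable {τ : ℝ} {f : ℂ → ℂ}

theorem ExpType.laplaceTransform_ofReal_eq_borelTransform (hτ : 0 ≤ τ) (hf : ExpType τ f) {s : ℝ}
    (hs : τ < s) : laplaceTransform (fun x => f x) s = borelTransform f s := by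
  have hs0 : 0 < s := hτ.trans_lt hs
  let F (n : ℕ) (x : ℝ) : ℂ :=
    iteratedDeriv n f 0 / n.factorial * ((x ^ n * exp (-(s * x)) : ℝ) : ℂ)
  have hF_integrable (n : ℕ) : IntegrableOn (F n) (Ioi 0) :=
    (integrableOn_pow_mul_exp_neg_mul_Ioi n hs0).ofReal.const_mul _
  have hF_norm (n : ℕ) : ∫ x in Ioi 0, ‖F n x‖ = ‖iteratedDeriv n f 0‖ / s ^ (n + 1) := by
    have hpos : ∀ x ∈ Ioi (0 : ℝ), ‖F n x‖ =
        ‖iteratedDeriv n f 0‖ / n.factorial * (x ^ n * exp (-(s * x))) := fun x hx => by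
      have hx0 : 0 < x := hx
      rw [norm_mul, norm_div, Complex.norm_natCast, Complex.norm_of_nonneg (by positivity)]
    rw [setIntegral_congr_fun measurableSet_Ioi hpos, integral_const_mul,
      integral_pow_mul_exp_neg_mul_Ioi n hs0]
    field_simp
  have hF_integral (n : ℕ) : ∫ x in Ioi 0, F n x = iteratedDeriv n f 0 / (s : ℂ) ^ (n + 1) := by
    rw [integral_const_mul, integral_complex_ofReal, integral_pow_mul_exp_neg_mul_Ioi n hs0]
    have hfact : (n.factorial : ℂ) ≠ 0 := Nat.cast_ne_zero.2 n.factorial_ne_zero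
    push_cast
    field_simp
  have hF_tsum (x : ℝ) : ∑' n, F n x = Complex.exp (-(s * x)) * f x := by
    rw [← Complex.taylorSeries_eq_of_entire hf.1 0 x, ← tsum_mul_left]
    refine tsum_congr fun n => ?_
    simp only [F, sub_zero, smul_eq_mul]
    push_cast
    ring
  have hswap := hasSum_integral_of_summable_integral_norm hF_integrable
    ((hf.summable_norm_iteratedDeriv_div_pow hτ hs).congr fun n => (hF_norm n).symm)
  simp only [hF_integral, hF_tsum] at hswap
  exact hswap.tsum_eq.symm

theorem isPreconnected_re_pos_inter_norm_gt {σ : ℝ} (hσ : 0 < σ) :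
    IsPreconnected {s : ℂ | 0 < s.re ∧ σ < ‖s‖} := by
  have himage : {s : ℂ | 0 < s.re ∧ σ < ‖s‖} =
      Complex.exp '' (Ioi (log σ) ×ℂ Ioo (-(π / 2)) (π / 2)) := by
    ext s
    constructor
    · rintro ⟨hre, hnorm⟩
      have hs0 : s ≠ 0 := norm_pos_iff.1 (hσ.trans hnorm)
      refine ⟨Complex.log s, ⟨?_, ?_⟩, Complex.exp_log hs0⟩
      · simpa [Complex.log_re] using log_lt_log hσ hnorm
      · simpa [abs_lt, Complex.log_im] using Complex.abs_arg_lt_pi_div_two_iff.2 (Or.inl hre)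
    · rintro ⟨ζ, ⟨hre, him⟩, rfl⟩
      refine ⟨?_, ?_⟩
      · rw [Complex.exp_re]
        exact mul_pos (exp_pos _) (cos_pos_of_mem_Ioo him)
      · rw [Complex.norm_exp]
        exact (log_lt_iff_lt_exp hσ).1 hre
  rw [himage]
  have hconvex : Convex ℝ (Ioi (log σ) ×ℂ Ioo (-(π / 2)) (π / 2)) :=
    ((convex_Ioi _).linear_preimage Complex.reLm).inter
      ((convex_Ioo _ _).linear_preimage Complex.imLm)
  exact hconvex.isPreconnected.image _ Complex.continuous_exp.continuousOn

theorem ExpType.laplaceTransform_eq_borelTransform_of_re_pos (hτ : 0 ≤ τ) (hf : ExpType τ f)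
    (hint : IntegrableOn (fun x : ℝ => f x) (Ioi 0)) {σ : ℝ} (hσ : τ < σ) :
    EqOn (laplaceTransform fun x => f x) (borelTransform f) {s | 0 < s.re ∧ σ < ‖s‖} := by
  have hσ0 : 0 < σ := hτ.trans_lt hσ
  have hopen : IsOpen {s : ℂ | 0 < s.re ∧ σ < ‖s‖} :=
    (isOpen_lt continuous_const Complex.continuous_re).inter
      (isOpen_lt continuous_const continuous_norm)
  have hL := ((differentiableOn_laplaceTransform hint).mono fun s hs => hs.1).analyticOnNhd hopen
  have hB := ((hf.differentiableOn_borelTransform hτ).mono fun s hs =>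
    hσ.trans hs.2).analyticOnNhd hopen
  have htendsto : Tendsto ((↑) : ℝ → ℂ) (𝓝[≠] (σ + 1)) (𝓝[≠] ((σ + 1 : ℝ) : ℂ)) :=
    Complex.continuous_ofReal.continuousWithinAt.tendsto_nhdsWithin fun x hx =>
      Complex.ofReal_injective.ne hx
  have hreal : ∀ᶠ x : ℝ in 𝓝[≠] (σ + 1),
      laplaceTransform (fun x => f x) x = borelTransform f x := by
    filter_upwards [nhdsWithin_le_nhds (lt_mem_nhds (by linarith : τ < σ + 1))] with x hx
    exact hf.laplaceTransform_ofReal_eq_borelTransform hτ hx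
  refine hL.eqOn_of_preconnected_of_frequently_eq hB (isPreconnected_re_pos_inter_norm_gt hσ0)
    ?_ (htendsto.frequently hreal.frequently)
  refine ⟨?_, ?_⟩
  · rw [Complex.ofReal_re]
    linarith
  · rw [Complex.norm_of_nonneg (by linarith)]
    linarith

theorem ExpType.laplaceTransform_eq_borelTransform (hτ : 0 ≤ τ) (hf : ExpType τ f)
    (hint : IntegrableOn (fun x : ℝ => f x) (Ioi 0)) {s : ℂ} (hre : 0 ≤ s.re) (hs : τ < ‖s‖) :
    laplaceTransform (fun x => f x) s = borelTransform f s := by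
  obtain ⟨σ, hτσ, hσs⟩ := exists_between hs
  have hopen : IsOpen {s : ℂ | σ < ‖s‖} := isOpen_lt continuous_const continuous_norm
  have hclosure : {s : ℂ | σ < ‖s‖} ∩ {s | 0 ≤ s.re} ⊆ closure {s | 0 < s.re ∧ σ < ‖s‖} := by
    rw [← Complex.closure_setOfPred_lt_re]
    exact hopen.inter_closure.trans (closure_mono fun z hz => ⟨hz.2, hz.1⟩)
  exact (hf.laplaceTransform_eq_borelTransform_of_re_pos hτ hint hτσ).of_subset_closure
    ((continuousOn_laplaceTransform hint).mono inter_subset_right)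
    ((hf.differentiableOn_borelTransform hτ).continuousOn.mono fun z hz => hτσ.trans hz.1)
    (fun z hz => ⟨hz.2, le_of_lt hz.1⟩) hclosure ⟨hσs, hre⟩

end LaplaceBorel

section Bessel

theorem intervalIntegral_cexp_int_mul_I (n : ℤ) (a : ℝ) :
    ∫ θ in a..a + 2 * π, Complex.exp (n * (θ * Complex.I)) = if n = 0 then 2 * (π : ℂ) else 0 := by
  split_ifs with hn
  · simp [hn]
  have hc : (n : ℂ) * Complex.I ≠ 0 := mul_ne_zero (Int.cast_ne_zero.2 hn) Complex.I_ne_zero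
  have hperiod : (n : ℂ) * Complex.I * (a + 2 * π : ℝ) =
      n * Complex.I * a + n * (2 * π * Complex.I) := by push_cast; ring
  have hint := integral_exp_mul_complex (a := a) (b := a + 2 * π) hc
  rw [hperiod, Complex.exp_add, Complex.exp_int_mul_two_pi_mul_I, mul_one, sub_self,
    zero_div] at hint
  simpa only [mul_assoc, mul_comm Complex.I] using hint

/-- The coefficient of `exp ((p.2 - p.1) w)` in the expansion of `exp (-y sinh w)` as the product of
the exponential series of `(y / 2) exp (-w)` and `-(y / 2) exp w`. -/
noncomputable def sinhExpCoeff (y : ℂ) (p : ℕ × ℕ) : ℂ :=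
  (y / 2) ^ p.1 / p.1.factorial * ((-(y / 2)) ^ p.2 / p.2.factorial)

theorem summable_norm_sinhExpCoeff (y : ℂ) : Summable fun p => ‖sinhExpCoeff y p‖ :=
  Summable.mul_norm (f := fun n : ℕ => (y / 2) ^ n / n.factorial)
    (g := fun n : ℕ => (-(y / 2)) ^ n / n.factorial)
    (NormedSpace.norm_expSeries_div_summable _) (NormedSpace.norm_expSeries_div_summable _)

theorem hasSum_sinhExpCoeff_mul_cexp (y w : ℂ) :
    HasSum (fun p => sinhExpCoeff y p * Complex.exp ((p.2 - p.1) * w))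
      (Complex.exp (-(y * Complex.sinh w))) := by
  let E (z : ℂ) (n : ℕ) : ℂ := z ^ n / n.factorial
  have hexp (z : ℂ) : HasSum (E z) (Complex.exp z) := by
    rw [Complex.exp_eq_exp_ℂ]
    exact NormedSpace.expSeries_div_hasSum_exp z
  have hnorm (z : ℂ) : Summable fun n => ‖E z n‖ := NormedSpace.norm_expSeries_div_summable z
  have hprod (u v : ℂ) : HasSum (fun p : ℕ × ℕ => E u p.1 * E v p.2) (Complex.exp (u + v)) := by
    rw [Complex.exp_add]
    exact (hexp u).mul (hexp v) (summable_mul_of_summable_norm (hnorm u) (hnorm v))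
  have hsinh : -(y * Complex.sinh w) = y / 2 * Complex.exp (-w) + -(y / 2) * Complex.exp w := by
    rw [Complex.sinh]
    ring
  rw [hsinh]
  refine (hprod _ _).congr_fun fun p => ?_
  have hpow : Complex.exp ((p.2 - p.1) * w) = Complex.exp (-w) ^ p.1 * Complex.exp w ^ p.2 := by
    rw [← Complex.exp_nat_mul, ← Complex.exp_nat_mul, ← Complex.exp_add]
    ring_nf
  simp only [E, sinhExpCoeff, hpow, mul_pow]
  ring

theorem hasSum_intervalIntegral_cexp_neg_mul_sinh (k : ℕ) (y a : ℝ) :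
    HasSum (fun p : ℕ × ℕ => sinhExpCoeff y p * if k + p.2 = p.1 then 2 * (π : ℂ) else 0)
      (∫ θ in a..a + 2 * π, Complex.exp (-(y * Complex.sinh (θ * Complex.I))) *
        Complex.exp (k * (θ * Complex.I))) := by
  let n (p : ℕ × ℕ) : ℤ := (k + p.2 : ℕ) - p.1
  let F (p : ℕ × ℕ) (θ : ℝ) : ℂ := sinhExpCoeff y p * Complex.exp (n p * (θ * Complex.I))
  have hnorm (p : ℕ × ℕ) (θ : ℝ) : ‖F p θ‖ = ‖sinhExpCoeff y p‖ := by
    rw [norm_mul, ← mul_assoc, ← Complex.ofReal_intCast, ← Complex.ofReal_mul,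
      Complex.norm_exp_ofReal_mul_I, mul_one]
  have hsum (θ : ℝ) : HasSum (fun p => F p θ) (Complex.exp
      (-(y * Complex.sinh (θ * Complex.I))) * Complex.exp (k * (θ * Complex.I))) := by
    refine ((hasSum_sinhExpCoeff_mul_cexp y (θ * Complex.I)).mul_right _).congr_fun fun p => ?_
    simp only [F, n]
    rw [mul_assoc (sinhExpCoeff _ _), ← Complex.exp_add]
    push_cast
    ring_nf
  have hswap := intervalIntegral.hasSum_integral_of_dominated_convergence (μ := volume)
    (a := a) (b := a + 2 * π) (fun p _ => ‖sinhExpCoeff y p‖)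
    (fun p => Continuous.aestronglyMeasurable (by fun_prop))
    (fun p => Eventually.of_forall fun θ _ => (hnorm p θ).le)
    (Eventually.of_forall fun _ _ => summable_norm_sinhExpCoeff y) intervalIntegrable_const
    (Eventually.of_forall fun θ _ => hsum θ)
  refine hswap.congr_fun fun p => ?_
  rw [intervalIntegral.integral_const_mul, intervalIntegral_cexp_int_mul_I]
  simp only [n, sub_eq_zero, Nat.cast_inj]

theorem intervalIntegral_cexp_neg_mul_sinh_mul_cexp (k : ℕ) (y a : ℝ) :
    ∫ θ in a..a + 2 * π, Complex.exp (-(y * Complex.sinh (θ * Complex.I))) *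
      Complex.exp (k * (θ * Complex.I)) = 2 * π * besselJ k y := by
  have hinj : Function.Injective fun q : ℕ => (k + q, q) := fun q q' h => (Prod.ext_iff.1 h).2
  have hdiag := (hinj.hasSum_iff fun p hp => ?_).2
    (hasSum_intervalIntegral_cexp_neg_mul_sinh k y a)
  · rw [← hdiag.tsum_eq, besselJ, Complex.ofReal_tsum, ← tsum_mul_left]
    refine tsum_congr fun q => ?_
    simp only [Function.comp_apply, if_true, sinhExpCoeff]
    push_cast
    rw [neg_pow ((y : ℂ) / 2), pow_add, pow_add, pow_mul']
    ring
  · rw [if_neg fun h => hp ⟨p.2, Prod.ext h rfl⟩, mul_zero]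

/-- The function `2 cosh (k ζ)` for even `k` and `2 sinh (k ζ)` for odd `k`: the factor by which
`exp (-y sinh ζ)` is integrated over the segment from `-π i / 2` to `π i / 2` in Bessel's integral
for the function of order `k`. -/
noncomputable def besselKernel (k : ℕ) (ζ : ℂ) : ℂ :=
  Complex.exp (k * ζ) + (-1) ^ k * Complex.exp (-(k * ζ))

theorem intervalIntegral_cexp_neg_mul_sinh_mul_besselKernel (k : ℕ) (y : ℝ) :
    ∫ θ in -(π / 2)..π / 2, Complex.exp (-(y * Complex.sinh (θ * Complex.I))) *
      besselKernel k (θ * Complex.I) = 2 * π * besselJ k y := by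
  let g (θ : ℝ) : ℂ := Complex.exp (-(y * Complex.sinh (θ * Complex.I))) *
    Complex.exp (k * (θ * Complex.I))
  have hg (a b : ℝ) : IntervalIntegrable g volume a b :=
    Continuous.intervalIntegrable (by fun_prop) a b
  have hfold (θ : ℝ) : g (π - θ) = Complex.exp (-(y * Complex.sinh (θ * Complex.I))) *
      ((-1) ^ k * Complex.exp (-(k * (θ * Complex.I)))) := by
    have hexp : (k : ℂ) * ((π - θ : ℝ) * Complex.I) =
        k * (π * Complex.I) + -(k * (θ * Complex.I)) := by push_cast; ring
    have hsinh : Complex.sinh ((π - θ : ℝ) * Complex.I) = Complex.sinh (θ * Complex.I) := by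
      rw [Complex.sinh_mul_I, Complex.sinh_mul_I, Complex.ofReal_sub, Complex.sin_pi_sub]
    simp only [g]
    rw [hexp, hsinh, Complex.exp_add, Complex.exp_nat_mul, Complex.exp_pi_mul_I]
  have hsplit : ∫ θ in -(π / 2)..-(π / 2) + 2 * π, g θ =
      (∫ θ in -(π / 2)..π / 2, g θ) + ∫ θ in -(π / 2)..π / 2, g (π - θ) := by
    rw [intervalIntegral.integral_comp_sub_left, sub_neg_eq_add, sub_half,
      show -(π / 2) + 2 * π = π + π / 2 by ring,
      intervalIntegral.integral_add_adjacent_intervals (hg _ _) (hg _ _)]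
  rw [← intervalIntegral_cexp_neg_mul_sinh_mul_cexp k y (-(π / 2)), hsplit,
    ← intervalIntegral.integral_add (hg _ _) (Continuous.intervalIntegrable (by fun_prop) _ _)]
  simp only [hfold, g, besselKernel, mul_add]

theorem differentiable_besselKernel (k : ℕ) : Differentiable ℂ (besselKernel k) := by
  unfold besselKernel
  fun_prop

theorem norm_besselKernel_le (k : ℕ) {ζ : ℂ} (hζ : 0 ≤ ζ.re) :
    ‖besselKernel k ζ‖ ≤ 2 * exp ζ.re ^ k := by
  have hle : exp (-(k * ζ.re)) ≤ exp (k * ζ.re) :=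
    exp_le_exp.2 (neg_le_self (by positivity))
  refine (norm_add_le _ _).trans ?_
  rw [norm_mul, norm_pow, norm_neg, norm_one, one_pow, one_mul, Complex.norm_exp, Complex.norm_exp,
    ← exp_nat_mul, Complex.neg_re, ← Complex.ofReal_natCast, Complex.re_ofReal_mul]
  linarith

theorem besselKernel_add_pi_mul_I (k : ℕ) (ζ : ℂ) :
    besselKernel k (ζ + π * Complex.I) = (-1) ^ k * besselKernel k ζ := by
  have hexp : Complex.exp (k * (π * Complex.I)) = (-1) ^ k := by
    rw [Complex.exp_nat_mul, Complex.exp_pi_mul_I]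
  have hexp_neg : Complex.exp (-(k * (π * Complex.I))) = (-1) ^ k := by
    rw [Complex.exp_neg, hexp, ← inv_pow, inv_neg_one]
  simp only [besselKernel, mul_add, neg_add, Complex.exp_add, hexp, hexp_neg]
  ring

variable {g : ℝ → ℂ}

theorem intervalIntegral_laplaceTransform_mul_besselKernel (hg : IntegrableOn g (Ioi 0)) (k : ℕ)
    (lam : ℝ) :
    ∫ θ in -(π / 2)..π / 2, laplaceTransform g (lam * Complex.sinh (θ * Complex.I)) *
      besselKernel k (θ * Complex.I) = 2 * π * ∫ x in Ioi 0, g x * besselJ k (lam * x) := by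
  let G (θ x : ℝ) : ℂ := Complex.exp (-(lam * Complex.sinh (θ * Complex.I) * x)) *
    besselKernel k (θ * Complex.I) * g x
  have hkernel : Continuous fun θ : ℝ => besselKernel k (θ * Complex.I) :=
    (differentiable_besselKernel k).continuous.comp (by fun_prop)
  have hG : Integrable (Function.uncurry G)
      ((volume.restrict (uIoc (-(π / 2)) (π / 2))).prod (volume.restrict (Ioi 0))) := by
    refine ((hkernel.integrableOn_uIoc.mul_prod hg).bdd_mul (c := 1)
      (f := fun p : ℝ × ℝ => Complex.exp (-(lam * Complex.sinh (p.1 * Complex.I) * p.2)))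
      (Continuous.aestronglyMeasurable (by fun_prop)) (Eventually.of_forall fun p => ?_)).congr
      (Eventually.of_forall fun p => (mul_assoc _ _ _).symm)
    rw [Complex.sinh_mul_I, Complex.norm_exp]
    simp
  calc ∫ θ in -(π / 2)..π / 2, laplaceTransform g (lam * Complex.sinh (θ * Complex.I)) *
        besselKernel k (θ * Complex.I)
      = ∫ θ in -(π / 2)..π / 2, ∫ x in Ioi 0, G θ x := by
        simp only [laplaceTransform, G, ← integral_mul_const, mul_right_comm]
    _ = ∫ x in Ioi 0, ∫ θ in -(π / 2)..π / 2, G θ x := intervalIntegral_integral_swap hG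
    _ = ∫ x in Ioi 0, 2 * π * (g x * besselJ k (lam * x)) := by
        refine integral_congr_ae (Eventually.of_forall fun x => ?_)
        have hbessel := intervalIntegral_cexp_neg_mul_sinh_mul_besselKernel k (lam * x)
        simp only [G, intervalIntegral.integral_mul_const]
        rw [mul_comm (g x), ← mul_assoc, ← hbessel]
        simp only [Complex.ofReal_mul, mul_right_comm]
    _ = 2 * π * ∫ x in Ioi 0, g x * besselJ k (lam * x) := integral_const_mul _ _

end Bessel

section Contour

theorem intervalIntegral_eq_of_continuousOn_reProdIm {E : Type*} [NormedAddCommGroup E]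
    [NormedSpace ℂ E] [CompleteSpace E] {H : ℂ → E} {a b c R : ℝ} (hab : a ≤ b) (hcR : c ≤ R)
    (hcont : ContinuousOn H (Icc c R ×ℂ Icc a b))
    (hdiff : DifferentiableOn ℂ H (Ioo c R ×ℂ Ioo a b))
    (hedge : ∀ x ∈ Icc c R, H (x + b * Complex.I) = H (x + a * Complex.I)) :
    ∫ y in a..b, H (R + y * Complex.I) = ∫ y in a..b, H (c + y * Complex.I) := by
  have hrect := Complex.integral_boundary_rect_eq_zero_of_continuousOn_of_differentiableOn H ⟨c, a⟩
    ⟨R, b⟩ (by simpa only [uIcc_of_le hab, uIcc_of_le hcR] using hcont)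
    (by simpa only [min_eq_left hab, min_eq_left hcR, max_eq_right hab, max_eq_right hcR])
  have hhoriz : ∫ x in c..R, H (x + b * Complex.I) = ∫ x in c..R, H (x + a * Complex.I) :=
    intervalIntegral.integral_congr fun x hx => hedge x (uIcc_of_le hcR ▸ hx)
  rw [hhoriz, sub_self, zero_add, sub_eq_zero] at hrect
  exact (smul_right_inj Complex.I_ne_zero).1 hrect

theorem intervalIntegral_eq_zero_of_halfStrip {E : Type*} [NormedAddCommGroup E]
    [NormedSpace ℂ E] [CompleteSpace E] {H : ℂ → E} {a b c : ℝ} {M : ℝ → ℝ} (hab : a ≤ b)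
    (hcont : ContinuousOn H (Ici c ×ℂ Icc a b)) (hdiff : DifferentiableOn ℂ H (Ioi c ×ℂ Ioo a b))
    (hedge : ∀ x ≥ c, H (x + b * Complex.I) = H (x + a * Complex.I))
    (hM : Tendsto M atTop (𝓝 0))
    (hbound : ∀ᶠ R : ℝ in atTop, ∀ y ∈ Icc a b, ‖H (R + y * Complex.I)‖ ≤ M R) :
    ∫ y in a..b, H (c + y * Complex.I) = 0 := by
  have hlim : Tendsto (fun R => M R * |b - a|) atTop (𝓝 0) := by
    simpa only [zero_mul] using hM.mul_const |b - a|
  refine norm_le_zero_iff.1 (ge_of_tendsto hlim ?_)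
  filter_upwards [hbound, eventually_ge_atTop c] with R hR hcR
  rw [← intervalIntegral_eq_of_continuousOn_reProdIm hab hcR
    (hcont.mono fun ζ hζ => ⟨hζ.1.1, hζ.2⟩) (hdiff.mono fun ζ hζ => ⟨hζ.1.1, hζ.2⟩)
    fun x hx => hedge x hx.1]
  exact intervalIntegral.norm_integral_le_of_norm_le_const fun y hy =>
    hR y (uIcc_of_le hab ▸ uIoc_subset_uIcc hy)

end Contour

section Sinh

theorem complex_sinh_eq (ζ : ℂ) : Complex.sinh ζ =
    (sinh ζ.re * cos ζ.im : ℝ) + (cosh ζ.re * sin ζ.im : ℝ) * Complex.I := by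
  conv_lhs => rw [← Complex.re_add_im ζ]
  rw [Complex.sinh_add, Complex.sinh_mul_I, Complex.cosh_mul_I]
  push_cast
  ring

theorem complex_sinh_re (ζ : ℂ) : (Complex.sinh ζ).re = sinh ζ.re * cos ζ.im := by
  rw [complex_sinh_eq, Complex.add_re, Complex.re_ofReal_mul, Complex.ofReal_re, Complex.I_re,
    mul_zero, add_zero]

theorem complex_sinh_of_im_eq_neg_pi_div_two {ζ : ℂ} (hζ : ζ.im = -(π / 2)) :
    Complex.sinh ζ = -(cosh ζ.re * Complex.I) := by
  simp [complex_sinh_eq, hζ]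

theorem sinh_re_le_norm_sinh (ζ : ℂ) : sinh ζ.re ≤ ‖Complex.sinh ζ‖ := by
  have htri := norm_sub_norm_le (Complex.exp ζ) (Complex.exp (-ζ))
  rw [Complex.norm_exp, Complex.norm_exp, Complex.neg_re] at htri
  rw [Complex.sinh, norm_div, sinh_eq, Complex.norm_ofNat]
  gcongr

theorem exp_le_three_mul_sinh {x : ℝ} (hx : 1 ≤ x) : exp x ≤ 3 * sinh x := by
  have hadd := cosh_add_sinh x
  have hsub := cosh_sub_sinh x
  have hexp : exp (-x) ≤ 1 := exp_le_one_iff.2 (by linarith)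
  have hsinh : x ≤ sinh x := self_le_sinh_iff.2 (by linarith)
  linarith

end Sinh

section Hankel

variable {g : ℝ → ℂ} {τ lam : ℝ} {f : ℂ → ℂ} {k : ℕ}

/-- The Laplace transform of `g` at `lam sinh ζ` times the kernel of order `k`: the function whose
integral over the left edge of the half-strip `0 ≤ re ζ`, `|im ζ| ≤ π / 2` is a multiple of the
Hankel transform of order `k` of `g` at `lam`. -/
noncomputable def hankelIntegrand (g : ℝ → ℂ) (k : ℕ) (lam : ℝ) (ζ : ℂ) : ℂ :=
  laplaceTransform g (lam * Complex.sinh ζ) * besselKernel k ζ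

theorem re_mul_sinh_nonneg (hlam : 0 ≤ lam) {ζ : ℂ}
    (hζ : ζ ∈ Ici 0 ×ℂ Icc (-(π / 2)) (π / 2)) : 0 ≤ (lam * Complex.sinh ζ).re := by
  rw [Complex.re_ofReal_mul, complex_sinh_re]
  exact mul_nonneg hlam (mul_nonneg (sinh_nonneg_iff.2 hζ.1) (cos_nonneg_of_mem_Icc hζ.2))

theorem norm_besselKernel_le_norm_sinh_pow (k : ℕ) {ζ : ℂ} (hζ : 1 ≤ ζ.re) :
    ‖besselKernel k ζ‖ ≤ 2 * (3 * ‖Complex.sinh ζ‖) ^ k := by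
  refine (norm_besselKernel_le k (zero_le_one.trans hζ)).trans ?_
  gcongr
  linarith [exp_le_three_mul_sinh hζ, sinh_re_le_norm_sinh ζ]

theorem continuousOn_hankelIntegrand (hg : IntegrableOn g (Ioi 0)) (k : ℕ) (hlam : 0 ≤ lam) :
    ContinuousOn (hankelIntegrand g k lam) (Ici 0 ×ℂ Icc (-(π / 2)) (π / 2)) := by
  refine ((continuousOn_laplaceTransform hg).comp (by fun_prop) fun ζ hζ => ?_).mul
    (differentiable_besselKernel k).continuous.continuousOn
  exact re_mul_sinh_nonneg hlam hζ

theorem differentiableOn_hankelIntegrand (hg : IntegrableOn g (Ioi 0)) (k : ℕ) (hlam : 0 < lam) :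
    DifferentiableOn ℂ (hankelIntegrand g k lam) (Ioi 0 ×ℂ Ioo (-(π / 2)) (π / 2)) := by
  refine ((differentiableOn_laplaceTransform hg).comp (by fun_prop) fun ζ hζ => ?_).mul
    (differentiable_besselKernel k).differentiableOn
  change 0 < (lam * Complex.sinh ζ).re
  rw [Complex.re_ofReal_mul, complex_sinh_re]
  exact mul_pos hlam (mul_pos (sinh_pos_iff.2 hζ.1) (cos_pos_of_mem_Ioo hζ.2))

theorem ExpType.hankelIntegrand_add_pi_mul_I (hτ : 0 ≤ τ) (hf : ExpType τ f)
    (hpar : ∀ z, f (-z) = (-1) ^ (k + 1) * f z) (hint : IntegrableOn (fun x : ℝ => f x) (Ioi 0))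
    (hlam : τ < lam) {ζ : ℂ} (hζ : ζ.im = -(π / 2)) :
    hankelIntegrand (fun x => f x) k lam (ζ + π * Complex.I) =
      hankelIntegrand (fun x => f x) k lam ζ := by
  let s : ℂ := lam * Complex.sinh ζ
  have hs : s = (-(lam * cosh ζ.re) : ℝ) * Complex.I := by
    simp only [s, complex_sinh_of_im_eq_neg_pi_div_two hζ]
    push_cast
    ring
  have hre : s.re = 0 := by rw [hs, Complex.re_ofReal_mul, Complex.I_re, mul_zero]
  have hnorm : τ < ‖s‖ := by
    rw [hs, norm_mul, Complex.norm_I, mul_one, Complex.norm_real, norm_neg,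
      norm_of_nonneg (by positivity [hτ.trans hlam.le])]
    exact hlam.trans_le (le_mul_of_one_le_right (hτ.trans hlam.le) (one_le_cosh _))
  have hborel : borelTransform f (-s) = (-1) ^ k * borelTransform f s := by
    rw [borelTransform_neg hpar, pow_succ, mul_neg_one, neg_neg]
  have hsq : ((-1 : ℂ) ^ k) * (-1) ^ k = 1 := by rw [← mul_pow, neg_one_mul, neg_neg, one_pow]
  rw [hankelIntegrand, hankelIntegrand, Complex.sinh_add_pi_mul_I, mul_neg,
    besselKernel_add_pi_mul_I, hf.laplaceTransform_eq_borelTransform hτ hint hre.ge hnorm,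
    hf.laplaceTransform_eq_borelTransform hτ hint (by rw [Complex.neg_re, hre, neg_zero])
      (by rwa [norm_neg]), hborel]
  linear_combination borelTransform f s * besselKernel k ζ * hsq

theorem ExpType.exists_norm_hankelIntegrand_le (hτ : 0 ≤ τ) (hf : ExpType τ f)
    (hord : k ≤ analyticOrderAt f 0) (hint : IntegrableOn (fun x : ℝ => f x) (Ioi 0))
    (hlam : τ < lam) :
    ∃ D, ∀ ζ ∈ Ici 1 ×ℂ Icc (-(π / 2)) (π / 2),
      ‖hankelIntegrand (fun x => f x) k lam ζ‖ ≤ D / ζ.re := by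
  have hlam0 : 0 < lam := hτ.trans_lt hlam
  obtain ⟨C, hC, hB⟩ := hf.exists_norm_borelTransform_le hτ hord hlam
  refine ⟨2 * 3 ^ k * C / lam ^ (k + 1), fun ζ hζ => ?_⟩
  have hre : 1 ≤ ζ.re := hζ.1
  have hre0 : 0 ≤ ζ.re := zero_le_one.trans hre
  have hsinh : ζ.re ≤ ‖Complex.sinh ζ‖ :=
    (self_le_sinh_iff.2 hre0).trans (sinh_re_le_norm_sinh ζ)
  have hsinh0 : 0 < ‖Complex.sinh ζ‖ := by linarith
  have hnorm : ‖(lam : ℂ) * Complex.sinh ζ‖ = lam * ‖Complex.sinh ζ‖ := by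
    rw [norm_mul, Complex.norm_of_nonneg hlam0.le]
  have hlarge : lam ≤ ‖(lam : ℂ) * Complex.sinh ζ‖ :=
    hnorm ▸ le_mul_of_one_le_right hlam0.le (hre.trans hsinh)
  have hlaplace : ‖laplaceTransform (fun x => f x) (lam * Complex.sinh ζ)‖ ≤
      C / (lam * ‖Complex.sinh ζ‖) ^ (k + 1) := by
    rw [hf.laplaceTransform_eq_borelTransform hτ hint
      (re_mul_sinh_nonneg hlam0.le ⟨hre0, hζ.2⟩) (hlam.trans_le hlarge), ← hnorm]
    exact hB _ hlarge
  calc ‖hankelIntegrand (fun x => f x) k lam ζ‖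
      ≤ C / (lam * ‖Complex.sinh ζ‖) ^ (k + 1) * (2 * (3 * ‖Complex.sinh ζ‖) ^ k) := by
        rw [hankelIntegrand, norm_mul]
        gcongr
        exact norm_besselKernel_le_norm_sinh_pow k hre
    _ = 2 * 3 ^ k * C / lam ^ (k + 1) / ‖Complex.sinh ζ‖ := by
        rw [mul_pow, mul_pow, pow_succ ‖Complex.sinh ζ‖]
        field_simp
    _ ≤ 2 * 3 ^ k * C / lam ^ (k + 1) / ζ.re := by gcongr

theorem hankel_vanishes_even_order_general (hτ : 0 ≤ τ) (hf : ExpType τ f)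
    (hpar : ∀ z, f (-z) = (-1) ^ (k + 1) * f z) (hord : k ≤ analyticOrderAt f 0)
    (hint : IntegrableOn (fun x : ℝ => f x) (Ioi 0)) (hlam : τ < lam) :
    ∫ x in Ioi (0 : ℝ), f x * (besselJ k (lam * x) : ℂ) = 0 := by
  have hlam0 : 0 < lam := hτ.trans_lt hlam
  obtain ⟨D, hD⟩ := hf.exists_norm_hankelIntegrand_le hτ hord hint hlam
  have hedge (x : ℝ) : hankelIntegrand (fun x => f x) k lam (x + (π / 2 : ℝ) * Complex.I) =
      hankelIntegrand (fun x => f x) k lam (x + (-(π / 2) : ℝ) * Complex.I) := by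
    rw [← hf.hankelIntegrand_add_pi_mul_I (ζ := x + (-(π / 2) : ℝ) * Complex.I) hτ hpar hint hlam
      (by simp)]
    congr 1
    push_cast
    ring
  have hcontour := intervalIntegral_eq_zero_of_halfStrip (by linarith [pi_pos])
    (continuousOn_hankelIntegrand hint k hlam0.le) (differentiableOn_hankelIntegrand hint k hlam0)
    (fun x _ => hedge x) (tendsto_const_nhds.div_atTop tendsto_id) <| by
      filter_upwards [eventually_ge_atTop 1] with R hR y hy
      simpa using hD (R + y * Complex.I) ⟨by simpa, by simpa using hy⟩
  have hbessel := intervalIntegral_laplaceTransform_mul_besselKernel hint k lam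
  simp only [hankelIntegrand, Complex.ofReal_zero, zero_add] at hcontour
  have hpi : (2 * π : ℂ) ≠ 0 := by simp [pi_ne_zero]
  exact (mul_eq_zero.1 (hbessel.symm.trans hcontour)).resolve_left hpi

end Hankel

theorem hankel_vanishes_even_order
    (τ : ℝ) (hτ : 0 ≤ τ) (m l : ℕ) (hl : l < m + 1)
    (f : ℂ → ℂ) (a : ℕ → ℂ) (ha : a 0 ≠ 0)
    (hf : ExpType τ f)
    (hexp : ∀ z : ℂ, HasSum (fun j : ℕ => a j * z ^ (2 * m + 1 + 2 * j)) (f z))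
    (hreal : ∀ x : ℝ, 0 ≤ x → (f x).im = 0)
    (hint : IntegrableOn (fun x : ℝ => f x) (Set.Ioi 0)) :
    ∀ lam : ℝ, τ < lam →
      ∫ x in Set.Ioi (0 : ℝ), f x * (besselJ (2 * l) (lam * x) : ℂ) = 0 := by
  intro lam hlam
  have hodd (z : ℂ) : f (-z) = (-1) ^ (2 * l + 1) * f z := by
    rw [Odd.neg_one_pow ⟨l, rfl⟩]
    refine (hexp (-z)).unique (((hexp z).mul_left (-1)).congr_fun fun j => ?_)
    rw [Odd.neg_pow ⟨m + j, by ring⟩]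
    ring
  have hord : ((2 * l : ℕ) : ℕ∞) ≤ analyticOrderAt f 0 :=
    natCast_le_analyticOrderAt_of_hasSum (fun j => by lia) hexp
  exact hankel_vanishes_even_order_general hτ hf hodd hord hint hlam
end

section
/- Let α, β > 0 be real numbers and let g(z) = 1/(Γ(α + βz)·Γ(α − βz)) for z ∈ ℂ, where 1/Γ denotes the entire reciprocal of the complex Gamma function. Then there exist constants C > 0 and R > 0 such that for all z ∈ ℂ with |z| ≥ R, |g(z)| ≤ (C·e^{2α} / (2π·|βz|^{2α−1}))·e^{βπ·|Im(z)|}. In particular, g is an entire function of exponential type βπ. -/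
/-!
By Euler's reflection formula `1 / Γ(b - w) = Γ(w + (1 - b)) sin(π(w + (1 - b))) / π`, so on the
right half-plane `1 / (Γ(a + w) Γ(b - w))` is a quotient of two Gamma values times a sine, and the
sine supplies the factor `exp(π |Im w|)`. On the left half-plane, exchange `a` with `b` and `w`
with `-w`.

The quotient `Γ(u + a) / Γ(u + b)` has size `|u| ^ Re(a - b)`: after multiplication by
`u ^ (b - a)`, replacing `u` by `u + 1` changes it by a factor `exp(O(1 / |u|²))`, because the
first-order terms of the logarithms cancel, and along `u, u + 1, u + 2, …` it tends to `1` by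
Euler's limit formula. Since `|u + n|² ≥ |u|² + n²` on the right half-plane, the product of these
factors is bounded uniformly in `u`.
-/

open Real

open Filter Asymptotics Topology

namespace ExpType

lemma comp_const_mul {τ : ℝ} {f : ℂ → ℂ} (hf : ExpType τ f) (β : ℂ) :
    ExpType (‖β‖ * τ) fun z => f (β * z) := by
  refine ⟨hf.1.comp (differentiable_id.const_mul β), fun ε hε => ?_⟩
  have hβ : 0 < ‖β‖ + 1 := by positivity
  obtain ⟨C, hC, hfC⟩ := hf.2 (ε / (‖β‖ + 1)) (div_pos hε hβ)
  refine ⟨C, hC, fun z => (hfC (β * z)).trans ?_⟩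
  have hε' : ε / (‖β‖ + 1) * ‖β‖ ≤ ε := by
    rw [div_mul_eq_mul_div, div_le_iff₀ hβ]
    nlinarith [norm_nonneg β]
  rw [norm_mul, ← mul_assoc]
  gcongr
  linarith

lemma of_isBigO_rpow_mul_exp {τ p : ℝ} {f : ℂ → ℂ} (hf : Differentiable ℂ f)
    (h : f =O[cocompact ℂ] fun z => ‖z‖ ^ p * Real.exp (τ * ‖z‖)) : ExpType τ f := by
  refine ⟨hf, fun ε hε => ?_⟩
  have hpow : (fun z : ℂ => ‖z‖ ^ p) =O[cocompact ℂ] fun z => Real.exp (ε * ‖z‖) :=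
    ((isLittleO_rpow_exp_pos_mul_atTop p hε).comp_tendsto
      tendsto_norm_cocompact_atTop).isBigO
  have hexp : f =O[cocompact ℂ] fun z => Real.exp ((τ + ε) * ‖z‖) :=
    (h.trans (hpow.mul (isBigO_refl _ _))).congr_right fun z => by
      rw [← Real.exp_add, add_mul, add_comm]
  have hbdd : Bornology.IsBounded
      (Set.range fun z => (Real.exp ((τ + ε) * ‖z‖))⁻¹ • f z) := by
    have hcont : Continuous fun z => (Real.exp ((τ + ε) * ‖z‖))⁻¹ • f z :=
      (Continuous.inv₀ (by fun_prop) fun _ => (Real.exp_pos _).ne').smul hf.continuous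
    refine (Continuous.isBounded_range_iff_isBigO hcont).2 ?_
    refine ((isBigO_refl _ _).smul hexp).congr_right fun z => ?_
    exact inv_mul_cancel₀ (Real.exp_pos _).ne'
  obtain ⟨C, hC, hfC⟩ := hbdd.exists_pos_norm_le
  refine ⟨C, hC, fun z => ?_⟩
  have hz := hfC _ (Set.mem_range_self z)
  rwa [norm_smul, norm_inv, Real.norm_of_nonneg (Real.exp_pos _).le,
    inv_mul_le_iff₀ (Real.exp_pos _), mul_comm] at hz

end ExpType

lemma mul_cpow_of_re_nonneg_of_re_pos {x y : ℂ} (hx : 0 ≤ x.re) (hy : 0 < y.re) (c : ℂ) :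
    (x * y) ^ c = x ^ c * y ^ c := by
  rcases eq_or_ne x 0 with rfl | hx0
  · rcases eq_or_ne c 0 with rfl | hc <;> simp [*]
  have hy0 : y ≠ 0 := fun h => by simp [h] at hy
  have harg : x.arg + y.arg ∈ Set.Ioc (-π) π := by
    have hxa := abs_le.1 (Complex.abs_arg_le_pi_div_two_iff.2 hx)
    have hya := abs_lt.1 (Complex.abs_arg_lt_pi_div_two_iff.2 (Or.inl hy))
    constructor <;> linarith
  rw [Complex.cpow_def_of_ne_zero (mul_ne_zero hx0 hy0), Complex.cpow_def_of_ne_zero hx0,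
    Complex.cpow_def_of_ne_zero hy0, Complex.log_mul hx0 hy0 harg, add_mul, Complex.exp_add]

lemma add_one_cpow {u : ℂ} (hu : u ≠ 0) (hre : 0 ≤ u.re) (c : ℂ) :
    (u + 1) ^ c = u ^ c * Complex.exp (c * Complex.log (1 + 1 / u)) := by
  have hre_inv : 0 < (1 + 1 / u).re := by
    rw [one_div, Complex.add_re, Complex.one_re, Complex.inv_re]
    exact add_pos_of_pos_of_nonneg one_pos (div_nonneg hre (Complex.normSq_nonneg u))
  have hne : 1 + 1 / u ≠ 0 := fun h => by rw [h, Complex.zero_re] at hre_inv; exact hre_inv.false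
  have hfactor : u + 1 = u * (1 + 1 / u) := by field_simp
  rw [hfactor, mul_cpow_of_re_nonneg_of_re_pos hre hre_inv, Complex.cpow_def_of_ne_zero hne,
    mul_comm c]

lemma sq_norm_add_sq_le_sq_norm_add_natCast {u : ℂ} (hu : 0 ≤ u.re) (n : ℕ) :
    ‖u‖ ^ 2 + (n : ℝ) ^ 2 ≤ ‖u + n‖ ^ 2 := by
  have hun : 0 ≤ u.re * n := mul_nonneg hu n.cast_nonneg
  rw [Complex.sq_norm, Complex.sq_norm, Complex.normSq_apply, Complex.normSq_apply]
  simp only [Complex.add_re, Complex.add_im, Complex.natCast_re, Complex.natCast_im]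
  linarith

lemma norm_le_norm_add_natCast {u : ℂ} (hu : 0 ≤ u.re) (n : ℕ) : ‖u‖ ≤ ‖u + n‖ := by
  have := sq_norm_add_sq_le_sq_norm_add_natCast hu n
  exact le_of_sq_le_sq (by linarith [sq_nonneg (n : ℝ)]) (norm_nonneg _)

lemma add_ne_neg_natCast {u a : ℂ} (hu : 0 ≤ u.re) (ha : ‖a‖ < ‖u‖) (n : ℕ) : u + a ≠ -n := by
  intro h
  have hun : u + n = -a := by linear_combination h
  have := norm_le_norm_add_natCast hu n
  rw [hun, norm_neg] at this
  exact this.not_gt ha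

lemma norm_log_one_add_sub_self_le_sq {z : ℂ} (hz : ‖z‖ ≤ 1 / 2) :
    ‖Complex.log (1 + z) - z‖ ≤ ‖z‖ ^ 2 := by
  have hinv : (1 - ‖z‖)⁻¹ ≤ 2 := inv_le_of_inv_le₀ two_pos (by linarith)
  calc ‖Complex.log (1 + z) - z‖ ≤ ‖z‖ ^ 2 * (1 - ‖z‖)⁻¹ / 2 :=
        Complex.norm_log_one_add_sub_self_le (by linarith)
    _ ≤ ‖z‖ ^ 2 * 2 / 2 := by gcongr
    _ = ‖z‖ ^ 2 := by ring

lemma norm_log_sub_log_sub_mul_log_le {a b u : ℂ} (hu : 2 * (‖a‖ + ‖b‖ + 1) ≤ ‖u‖) :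
    ‖Complex.log (1 + b / u) - Complex.log (1 + a / u) - (b - a) * Complex.log (1 + 1 / u)‖
      ≤ (‖a‖ ^ 2 + ‖b‖ ^ 2 + ‖b - a‖) / ‖u‖ ^ 2 := by
  have ha := norm_nonneg a
  have hb := norm_nonneg b
  have hlog : ∀ c : ℂ, ‖c‖ ≤ ‖a‖ + ‖b‖ + 1 →
      ‖Complex.log (1 + c / u) - c / u‖ ≤ ‖c‖ ^ 2 / ‖u‖ ^ 2 := fun c hc => by
    rw [← div_pow, ← norm_div]
    refine norm_log_one_add_sub_self_le_sq ?_
    rw [norm_div, div_le_iff₀ (by linarith)]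
    linarith
  have hloga := hlog a (by linarith)
  have hlogb := hlog b (by linarith)
  have hlog1 := hlog 1 (by rw [norm_one]; linarith)
  calc ‖Complex.log (1 + b / u) - Complex.log (1 + a / u) - (b - a) * Complex.log (1 + 1 / u)‖
      = ‖(Complex.log (1 + b / u) - b / u) - (Complex.log (1 + a / u) - a / u)
          - (b - a) * (Complex.log (1 + 1 / u) - 1 / u)‖ := by congr 1; ring
    _ ≤ ‖b‖ ^ 2 / ‖u‖ ^ 2 + ‖a‖ ^ 2 / ‖u‖ ^ 2 + ‖b - a‖ * (‖(1 : ℂ)‖ ^ 2 / ‖u‖ ^ 2) := by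
      refine (norm_sub_le _ _).trans (add_le_add ((norm_sub_le _ _).trans ?_) ?_)
      · exact add_le_add hlogb hloga
      · rw [norm_mul]
        gcongr
    _ = (‖a‖ ^ 2 + ‖b‖ ^ 2 + ‖b - a‖) / ‖u‖ ^ 2 := by rw [norm_one]; ring

lemma summable_inv_one_add_natCast_sq : Summable fun n : ℕ => (1 + (n : ℝ) ^ 2)⁻¹ := by
  refine .of_norm_bounded_eventually_nat (Real.summable_nat_pow_inv.2 one_lt_two) ?_
  filter_upwards [eventually_gt_atTop 0] with n hn
  rw [Real.norm_of_nonneg (by positivity)]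
  gcongr
  linarith

lemma norm_sin_le_exp_abs_im (z : ℂ) : ‖Complex.sin z‖ ≤ Real.exp |z.im| := by
  have hneg : ‖Complex.exp (-z * Complex.I)‖ ≤ Real.exp |z.im| := by
    simpa [Complex.norm_exp] using le_abs_self z.im
  have hpos : ‖Complex.exp (z * Complex.I)‖ ≤ Real.exp |z.im| := by
    simpa [Complex.norm_exp] using neg_le_abs z.im
  rw [Complex.sin, norm_div, norm_mul, Complex.norm_I, mul_one, Complex.norm_ofNat,
    div_le_iff₀ two_pos]
  linarith [norm_sub_le (Complex.exp (-z * Complex.I)) (Complex.exp (z * Complex.I))]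

lemma ascPochhammer_eval_eq_prod_range {R : Type*} [CommSemiring R] (x : R) (n : ℕ) :
    (ascPochhammer R n).eval x = ∏ j ∈ Finset.range n, (x + j) := by
  induction n with
  | zero => simp
  | succ n ih => rw [ascPochhammer_succ_eval, ih, Finset.prod_range_succ]

lemma GammaSeq_eq_mul_Gamma_div_Gamma {s : ℂ} (hs : ∀ m : ℕ, s ≠ -m) (n : ℕ) :
    Complex.GammaSeq s n = n ^ s * n.factorial * (Complex.Gamma s / Complex.Gamma (s + n + 1)) := by
  have hprod : ∏ j ∈ Finset.range (n + 1), (s + j) =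
      Complex.Gamma (s + n + 1) / Complex.Gamma s := by
    rw [← ascPochhammer_eval_eq_prod_range, ← Complex.Gamma_add_nat_div_Gamma_eq s hs]
    push_cast
    rw [add_assoc]
  rw [Complex.GammaSeq, hprod, div_div_eq_mul_div, mul_div_assoc]

lemma Gamma_add_natCast_add_one_isEquivalent {s : ℂ} (hs : ∀ m : ℕ, s ≠ -m) :
    (fun n : ℕ => Complex.Gamma (s + n + 1)) ~[atTop] fun n => n ^ s * n.factorial := by
  have hΓ := Complex.Gamma_ne_zero hs
  have hlim := (Complex.GammaSeq_tendsto_Gamma s).div_const (Complex.Gamma s)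
  rw [div_self hΓ] at hlim
  refine (isEquivalent_of_tendsto_one (hlim.congr fun n => ?_)).symm
  rw [GammaSeq_eq_mul_Gamma_div_Gamma hs, Pi.div_apply]
  field_simp

lemma add_natCast_cpow_isEquivalent (u c : ℂ) :
    (fun n : ℕ => (u + n) ^ c) ~[atTop] fun n => (n : ℂ) ^ c := by
  have hone : Tendsto (fun n : ℕ => 1 + u / n) atTop (𝓝 1) := by
    simpa using (tendsto_const_div_atTop_nhds_zero_nat u).const_add 1
  have hcpow : Tendsto (fun n : ℕ => (1 + u / n) ^ c) atTop (𝓝 1) := by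
    simpa using hone.cpow (tendsto_const_nhds (x := c)) (by simp)
  have hre : ∀ᶠ n : ℕ in atTop, 0 < (1 + u / n).re :=
    ((Complex.continuous_re.tendsto 1).comp hone).eventually_const_lt (by simp)
  refine isEquivalent_of_tendsto_one (hcpow.congr' ?_)
  filter_upwards [hre, eventually_ne_atTop 0] with n hn hn0
  have hn0' : (n : ℂ) ≠ 0 := Nat.cast_ne_zero.2 hn0
  have hfactor : u + n = n * (1 + u / n) := by field_simp; ring
  rw [Pi.div_apply, hfactor, mul_cpow_of_re_nonneg_of_re_pos (by simp) hn,
    mul_div_cancel_left₀ _ (by simp [Complex.cpow_eq_zero_iff, hn0'])]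

/-- The quotient `Γ(u + a) / Γ(u + b)` divided by its leading term `u ^ (a - b)` as `u → ∞`
in the right half-plane, with the principal branch of the power. -/
noncomputable def gammaQuotient (a b u : ℂ) : ℂ :=
  Complex.Gamma (u + a) / Complex.Gamma (u + b) * u ^ (b - a)

namespace gammaQuotient

variable {a b u : ℂ}

lemma tendsto_add_natCast_add_one (ha : ∀ m : ℕ, u + a ≠ -m) (hb : ∀ m : ℕ, u + b ≠ -m) :
    Tendsto (fun n : ℕ => gammaQuotient a b (u + (n + 1 : ℕ))) atTop (𝓝 1) := by
  have hΓ := (Gamma_add_natCast_add_one_isEquivalent ha).div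
    (Gamma_add_natCast_add_one_isEquivalent hb)
  have hQ := hΓ.mul (add_natCast_cpow_isEquivalent (u + 1) (b - a))
  refine (isEquivalent_const_iff_tendsto one_ne_zero).1 ((hQ.congr_left ?_).congr_right ?_)
  · refine .of_forall fun n => ?_
    simp only [gammaQuotient, Pi.mul_apply, Pi.div_apply, Nat.cast_add, Nat.cast_one]
    ring_nf
  · filter_upwards [eventually_ne_atTop 0] with n hn
    have hn' : (n : ℂ) ≠ 0 := Nat.cast_ne_zero.2 hn
    have hfac : (n.factorial : ℂ) ≠ 0 := Nat.cast_ne_zero.2 n.factorial_ne_zero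
    have hsub : b - a = (u + b) - (u + a) := by ring
    simp only [Pi.mul_apply, Pi.div_apply]
    rw [hsub, Complex.cpow_sub _ _ hn']
    have hcpow : ∀ c : ℂ, (n : ℂ) ^ c ≠ 0 := fun c => by simp [Complex.cpow_eq_zero_iff, hn']
    field_simp [hcpow]
    simp only [Function.const_apply]

lemma eq_exp_mul_add_one (hre : 0 ≤ u.re) (hu : u ≠ 0) (hua : u + a ≠ 0) (hub : u + b ≠ 0) :
    gammaQuotient a b u =
      Complex.exp (Complex.log (1 + b / u) - Complex.log (1 + a / u)
        - (b - a) * Complex.log (1 + 1 / u)) * gammaQuotient a b (u + 1) := by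
  have hexp_log : ∀ c : ℂ, u + c ≠ 0 → Complex.exp (Complex.log (1 + c / u)) = (u + c) / u :=
    fun c hc => by rw [one_add_div hu, Complex.exp_log (div_ne_zero hc hu)]
  rw [gammaQuotient, gammaQuotient, add_right_comm u 1 a, add_right_comm u 1 b,
    Complex.Gamma_add_one _ hua, Complex.Gamma_add_one _ hub, add_one_cpow hu hre,
    Complex.exp_sub, Complex.exp_sub, hexp_log a hua, hexp_log b hub]
  field_simp [Complex.exp_ne_zero]

lemma norm_le_exp_mul_norm_add_one (hre : 0 ≤ u.re) (hu : 2 * (‖a‖ + ‖b‖ + 1) ≤ ‖u‖) :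
    ‖gammaQuotient a b u‖ ≤
      Real.exp ((‖a‖ ^ 2 + ‖b‖ ^ 2 + ‖b - a‖) / ‖u‖ ^ 2) * ‖gammaQuotient a b (u + 1)‖ := by
  have ha := norm_nonneg a
  have hb := norm_nonneg b
  have hne : ∀ c : ℂ, ‖c‖ < ‖u‖ → u + c ≠ 0 := fun c hc => by
    simpa using add_ne_neg_natCast hre hc 0
  have hu0 : u ≠ 0 := norm_pos_iff.1 (by linarith)
  rw [eq_exp_mul_add_one hre hu0 (hne a (by linarith)) (hne b (by linarith)), norm_mul]
  gcongr
  refine (Complex.norm_exp_le_exp_norm _).trans ?_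
  gcongr
  exact norm_log_sub_log_sub_mul_log_le hu

lemma norm_le_exp_sum_mul_norm_add_natCast (hre : 0 ≤ u.re)
    (hu : 2 * (‖a‖ + ‖b‖ + 1) ≤ ‖u‖) (n : ℕ) :
    ‖gammaQuotient a b u‖ ≤
      Real.exp ((‖a‖ ^ 2 + ‖b‖ ^ 2 + ‖b - a‖) * ∑ j ∈ Finset.range n, (1 + (j : ℝ) ^ 2)⁻¹)
        * ‖gammaQuotient a b (u + n)‖ := by
  induction n with
  | zero => simp
  | succ n ih =>
    have hsq : 1 + (n : ℝ) ^ 2 ≤ ‖u + n‖ ^ 2 := by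
      have := one_le_pow₀ (n := 2) (show 1 ≤ ‖u‖ by linarith [norm_nonneg a, norm_nonneg b])
      linarith [sq_norm_add_sq_le_sq_norm_add_natCast hre n]
    have hstep := norm_le_exp_mul_norm_add_one (a := a) (b := b) (u := u + n)
      (by simpa using add_nonneg hre n.cast_nonneg) (hu.trans (norm_le_norm_add_natCast hre n))
    refine ih.trans ?_
    rw [Finset.sum_range_succ, mul_add, Real.exp_add, mul_assoc, Nat.cast_add_one, ← add_assoc]
    gcongr
    refine hstep.trans ?_
    rw [div_eq_mul_inv]
    gcongr

theorem norm_le_exp_tsum (hre : 0 ≤ u.re) (hu : 2 * (‖a‖ + ‖b‖ + 1) ≤ ‖u‖) :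
    ‖gammaQuotient a b u‖ ≤
      Real.exp ((‖a‖ ^ 2 + ‖b‖ ^ 2 + ‖b - a‖) * ∑' j : ℕ, (1 + (j : ℝ) ^ 2)⁻¹) := by
  have ha := norm_nonneg a
  have hb := norm_nonneg b
  have hlim := ((tendsto_add_natCast_add_one
    (add_ne_neg_natCast (a := a) hre (by linarith))
    (add_ne_neg_natCast (a := b) hre (by linarith))).norm).const_mul
      (Real.exp ((‖a‖ ^ 2 + ‖b‖ ^ 2 + ‖b - a‖) * ∑' j : ℕ, (1 + (j : ℝ) ^ 2)⁻¹))
  rw [norm_one, mul_one] at hlim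
  refine ge_of_tendsto' hlim fun n => ?_
  refine (norm_le_exp_sum_mul_norm_add_natCast hre hu (n + 1)).trans ?_
  gcongr
  exact summable_inv_one_add_natCast_sq.sum_le_tsum _ fun j _ => by positivity

end gammaQuotient

theorem exists_norm_Gamma_div_Gamma_le (a b : ℂ) :
    ∃ K > 0, ∃ R > 0, ∀ u : ℂ, 0 ≤ u.re → R ≤ ‖u‖ →
      ‖Complex.Gamma (u + a) / Complex.Gamma (u + b)‖ ≤ K * ‖u‖ ^ (a - b).re := by
  set Q := Real.exp ((‖a‖ ^ 2 + ‖b‖ ^ 2 + ‖b - a‖) * ∑' j : ℕ, (1 + (j : ℝ) ^ 2)⁻¹)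
  refine ⟨Q * Real.exp (π * |(a - b).im|), by positivity, 2 * (‖a‖ + ‖b‖ + 1), by positivity,
    fun u hre hu => ?_⟩
  have hu0 : u ≠ 0 := norm_pos_iff.1 (hu.trans_lt' (by positivity))
  have hcpow : ‖u ^ (a - b)‖ ≤ ‖u‖ ^ (a - b).re * Real.exp (π * |(a - b).im|) := by
    rw [Complex.norm_cpow_of_ne_zero hu0, div_eq_mul_inv, ← Real.exp_neg]
    gcongr
    refine (neg_le_abs _).trans ?_
    rw [abs_mul]
    gcongr
    exact Complex.abs_arg_le_pi u
  have hcancel : u ^ (b - a) * u ^ (a - b) = 1 := by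
    rw [← Complex.cpow_add _ _ hu0, sub_add_sub_cancel, sub_self, Complex.cpow_zero]
  calc ‖Complex.Gamma (u + a) / Complex.Gamma (u + b)‖
      = ‖gammaQuotient a b u‖ * ‖u ^ (a - b)‖ := by
        rw [← norm_mul, gammaQuotient, mul_assoc, hcancel, mul_one]
    _ ≤ Q * (‖u‖ ^ (a - b).re * Real.exp (π * |(a - b).im|)) := by
        gcongr
        exact gammaQuotient.norm_le_exp_tsum hre hu
    _ = Q * Real.exp (π * |(a - b).im|) * ‖u‖ ^ (a - b).re := by ring

lemma inv_Gamma_one_sub {s : ℂ} (hs : ∀ m : ℕ, s ≠ -m) :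
    (Complex.Gamma (1 - s))⁻¹ = Complex.Gamma s * (Complex.sin (π * s) / π) := by
  rw [← inv_div, ← Complex.Gamma_mul_Gamma_one_sub, mul_inv,
    mul_inv_cancel_left₀ (Complex.Gamma_ne_zero hs)]

theorem exists_norm_inv_Gamma_mul_inv_Gamma_le_of_re_nonneg (a b : ℂ) :
    ∃ K > 0, ∃ R > 0, ∀ w : ℂ, 0 ≤ w.re → R ≤ ‖w‖ →
      ‖(Complex.Gamma (a + w))⁻¹ * (Complex.Gamma (b - w))⁻¹‖
        ≤ K * ‖w‖ ^ (1 - (a + b).re) * Real.exp (π * |w.im|) := by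
  obtain ⟨K, hK, R, hR, hΓ⟩ := exists_norm_Gamma_div_Gamma_le (1 - b) a
  refine ⟨K * Real.exp (π * |b.im|) / π, by positivity, max R (‖1 - b‖ + 1), by positivity,
    fun w hre hw => ?_⟩
  have hrefl : (Complex.Gamma (b - w))⁻¹ = Complex.Gamma (w + (1 - b)) *
      (Complex.sin (π * (w + (1 - b))) / π) := by
    rw [← inv_Gamma_one_sub (add_ne_neg_natCast hre (by linarith [le_of_max_le_right hw]))]
    ring_nf
  have hsin : ‖Complex.sin (π * (w + (1 - b)))‖ ≤
      Real.exp (π * |b.im|) * Real.exp (π * |w.im|) := by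
    refine (norm_sin_le_exp_abs_im _).trans ?_
    rw [← Real.exp_add, ← mul_add, Complex.im_ofReal_mul, abs_mul, abs_of_pos pi_pos]
    gcongr
    simpa [sub_eq_add_neg, add_comm] using abs_sub w.im b.im
  have hexponent : (1 - b - a).re = 1 - (a + b).re := by simp; ring
  calc ‖(Complex.Gamma (a + w))⁻¹ * (Complex.Gamma (b - w))⁻¹‖
      = ‖Complex.Gamma (w + (1 - b)) / Complex.Gamma (w + a)‖ *
          ‖Complex.sin (π * (w + (1 - b)))‖ / π := by
        rw [hrefl, add_comm a w, norm_mul, norm_mul, norm_div, norm_div, norm_inv,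
          Complex.norm_of_nonneg pi_pos.le]
        ring
    _ ≤ K * ‖w‖ ^ (1 - (a + b).re) * (Real.exp (π * |b.im|) * Real.exp (π * |w.im|)) / π := by
        gcongr
        exact hexponent ▸ hΓ w hre (le_of_max_le_left hw)
    _ = K * Real.exp (π * |b.im|) / π * ‖w‖ ^ (1 - (a + b).re) * Real.exp (π * |w.im|) := by ring

theorem exists_norm_inv_Gamma_mul_inv_Gamma_le (a b : ℂ) :
    ∃ K > 0, ∃ R > 0, ∀ w : ℂ, R ≤ ‖w‖ →
      ‖(Complex.Gamma (a + w))⁻¹ * (Complex.Gamma (b - w))⁻¹‖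
        ≤ K * ‖w‖ ^ (1 - (a + b).re) * Real.exp (π * |w.im|) := by
  obtain ⟨K₁, hK₁, R₁, hR₁, h₁⟩ := exists_norm_inv_Gamma_mul_inv_Gamma_le_of_re_nonneg a b
  obtain ⟨K₂, -, R₂, -, h₂⟩ := exists_norm_inv_Gamma_mul_inv_Gamma_le_of_re_nonneg b a
  refine ⟨max K₁ K₂, by positivity, max R₁ R₂, by positivity, fun w hw => ?_⟩
  rcases le_total 0 w.re with hre | hre
  · refine (h₁ w hre (le_of_max_le_left hw)).trans ?_
    gcongr
    exact le_max_left ..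
  · have hneg := h₂ (-w) (by simpa using hre) (by simpa using le_of_max_le_right hw)
    rw [norm_neg, Complex.neg_im, abs_neg, sub_neg_eq_add, ← sub_eq_add_neg, mul_comm,
      add_comm b a] at hneg
    refine hneg.trans ?_
    gcongr
    exact le_max_right ..

lemma differentiable_inv_Gamma_mul_inv_Gamma (a b : ℂ) :
    Differentiable ℂ fun w => (Complex.Gamma (a + w))⁻¹ * (Complex.Gamma (b - w))⁻¹ :=
  (Complex.differentiable_one_div_Gamma.comp (differentiable_id.const_add a)).mul
    (Complex.differentiable_one_div_Gamma.comp (differentiable_id.const_sub b))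

theorem expType_inv_Gamma_mul_inv_Gamma (a b : ℂ) :
    ExpType π fun w => (Complex.Gamma (a + w))⁻¹ * (Complex.Gamma (b - w))⁻¹ := by
  obtain ⟨K, hK, R, -, hbound⟩ := exists_norm_inv_Gamma_mul_inv_Gamma_le a b
  refine .of_isBigO_rpow_mul_exp (p := 1 - (a + b).re)
    (differentiable_inv_Gamma_mul_inv_Gamma a b) (.of_bound K ?_)
  filter_upwards [tendsto_norm_cocompact_atTop.eventually_ge_atTop R] with w hw
  rw [Real.norm_of_nonneg (by positivity), ← mul_assoc]
  refine (hbound w hw).trans ?_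
  gcongr
  exact Complex.abs_im_le_norm w

theorem recip_gamma_product_exp_type_general (a b : ℂ) {β : ℂ} (hβ : β ≠ 0) :
    (∃ C > 0, ∃ R > 0, ∀ z : ℂ, R ≤ ‖z‖ →
      ‖(Complex.Gamma (a + β * z))⁻¹ * (Complex.Gamma (b - β * z))⁻¹‖
        ≤ C * Real.exp (a + b).re / (2 * π * ‖β * z‖ ^ ((a + b).re - 1))
            * Real.exp (π * |(β * z).im|)) ∧
    ExpType (‖β‖ * π)
      (fun z : ℂ => (Complex.Gamma (a + β * z))⁻¹ * (Complex.Gamma (b - β * z))⁻¹) := by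
  refine ⟨?_, (expType_inv_Gamma_mul_inv_Gamma a b).comp_const_mul β⟩
  obtain ⟨K, hK, R, hR, hbound⟩ := exists_norm_inv_Gamma_mul_inv_Gamma_le a b
  have hβ' : 0 < ‖β‖ := norm_pos_iff.2 hβ
  refine ⟨2 * π * K / Real.exp (a + b).re, by positivity, R / ‖β‖, by positivity, fun z hz => ?_⟩
  have hz' : R ≤ ‖β * z‖ := by rwa [norm_mul, ← div_le_iff₀' hβ']
  refine (hbound (β * z) hz').trans_eq ?_
  rw [div_mul_cancel₀ _ (Real.exp_pos _).ne', mul_div_mul_left _ _ (by positivity),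
    ← neg_sub (a + b).re, Real.rpow_neg (norm_nonneg _), div_eq_mul_inv]

theorem recip_gamma_product_exp_type (α β : ℝ) (hα : 0 < α) (hβ : 0 < β) :
    (∃ C > 0, ∃ R > 0, ∀ z : ℂ, R ≤ ‖z‖ →
      ‖(Complex.Gamma (α + β * z))⁻¹ * (Complex.Gamma (α - β * z))⁻¹‖
        ≤ C * Real.exp (2 * α) / (2 * π * ‖(β : ℂ) * z‖ ^ (2 * α - 1))
            * Real.exp (β * π * |z.im|)) ∧
    ExpType (β * π)
      (fun z : ℂ => (Complex.Gamma (α + β * z))⁻¹ * (Complex.Gamma (α - β * z))⁻¹) := by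
  simpa [abs_mul, abs_of_pos hβ, two_mul, mul_left_comm, mul_assoc] using
    recip_gamma_product_exp_type_general α α (Complex.ofReal_ne_zero.2 hβ.ne')
end

section
/- The integral ∫_0^∞ J_1(πx) / (Γ(1+x)·Γ(1−x)) dx equals 1/π, where 1/(Γ(1+x)·Γ(1−x)) denotes the entire even function of x given by the product of reciprocal Gamma functions (equivalently, sin(πx)/(πx)). -/
open MeasureTheory Real

/-
The reflection formula turns the Gamma factor into `sinc (π * x)`, so after rescaling the claim is
`∫ J_1(t) * sin t / t dt = 1` over `(0, ∞)`. The integrand has the antiderivative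
`-(J_0(t) * cos t + J_1(t) * sin t)`, which is `-1` at `0` and tends to `0` at infinity. Both this
limit and the integrability rest on `J_n(t) = O(t ^ (-1 / 2))`: the energy of `√t * J_0(t)`
decreases and dominates `t * (J_0(t) ^ 2 + J_1(t) ^ 2) / 2`, and the three-term recurrence carries
the bound to all `n`.
-/

open Filter Asymptotics Topology
open scoped Nat

/-- The Bessel–Clifford function `C_n` of order `n`, characterised by
`J_n(x) = (x / 2) ^ n * C_n(-(x / 2) ^ 2)`. Stripping the power and the signs off `J_n` leaves a
power series whose differentiation just raises `n`. -/
noncomputable def besselClifford (n : ℕ) (y : ℝ) : ℝ :=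
  ∑' k : ℕ, y ^ k / (k ! * (n + k)!)

theorem norm_pow_div_factorial_mul_factorial_le (n k : ℕ) (y : ℝ) :
    ‖y ^ k / (k ! * (n + k)!)‖ ≤ |y| ^ k / k ! := by
  have one_le_factorial : (1 : ℝ) ≤ (n + k)! := by exact_mod_cast (n + k).factorial_pos
  rw [norm_div, norm_pow, norm_mul, norm_natCast, norm_natCast, norm_eq_abs]
  gcongr
  exact le_mul_of_one_le_right (by positivity) one_le_factorial

theorem summable_besselClifford (n : ℕ) (y : ℝ) :
    Summable fun k : ℕ => y ^ k / (k ! * (n + k)!) :=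
  .of_norm_bounded (summable_pow_div_factorial |y|)
    fun k => norm_pow_div_factorial_mul_factorial_le n k y

theorem besselClifford_zero_right (n : ℕ) : besselClifford n 0 = 1 / n ! := by
  rw [besselClifford, tsum_eq_single 0 fun k hk => by simp [hk]]
  simp

theorem hasDerivAt_besselClifford (n : ℕ) (y : ℝ) :
    HasDerivAt (besselClifford n) (besselClifford (n + 1) y) y := by
  have hasDerivAt_term (k : ℕ) (z : ℝ) :
      HasDerivAt (fun z : ℝ => z ^ (k + 1) / ((k + 1)! * (n + (k + 1))!))
        (z ^ k / (k ! * (n + 1 + k)!)) z := by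
    refine ((hasDerivAt_pow (k + 1) z).div_const _).congr_deriv ?_
    rw [Nat.factorial_succ k, add_right_comm n 1 k, add_assoc n k 1, Nat.add_sub_cancel]
    push_cast
    field_simp
  have hasDerivAt_tail := hasDerivAt_tsum_of_isPreconnected
    (summable_pow_div_factorial (|y| + 1)) Metric.isOpen_ball
    (convex_ball (0 : ℝ) (|y| + 1)).isPreconnected
    (fun k z _ => hasDerivAt_term k z)
    (fun k z hz => (norm_pow_div_factorial_mul_factorial_le (n + 1) k z).trans <| by
      have : |z| ≤ |y| + 1 := (mem_ball_zero_iff.1 hz).le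
      gcongr)
    (Metric.mem_ball_self (by positivity))
    ((summable_nat_add_iff 1).2 (summable_besselClifford n 0))
    (mem_ball_zero_iff.2 (lt_add_one _))
  refine (hasDerivAt_tail.const_add (1 / (n ! : ℝ))).congr_of_eventuallyEq (.of_forall fun z => ?_)
  simp [besselClifford, (summable_besselClifford n z).tsum_eq_zero_add]

theorem besselClifford_recurrence (n : ℕ) (y : ℝ) :
    (n + 1) * besselClifford (n + 1) y + y * besselClifford (n + 2) y = besselClifford n y := by
  have hasSum_shift : HasSum (fun k : ℕ => k * (y ^ k / (k ! * (n + 1 + k)!)))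
      (y * besselClifford (n + 2) y) := by
    rw [← hasSum_nat_add_iff' 1, Finset.sum_range_one, Nat.cast_zero, zero_mul, sub_zero]
    refine ((summable_besselClifford (n + 2) y).hasSum.mul_left y).congr_fun fun k => ?_
    rw [Nat.factorial_succ k, show n + 1 + (k + 1) = n + 2 + k by ring]
    push_cast
    field_simp
    ring
  refine HasSum.unique
    (((summable_besselClifford (n + 1) y).hasSum.mul_left (n + 1 : ℝ)).add hasSum_shift)
    ((summable_besselClifford n y).hasSum.congr_fun fun k => ?_)
  rw [add_right_comm n 1 k, Nat.factorial_succ (n + k)]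
  push_cast
  field_simp
  ring

theorem besselJ_eq_pow_mul_besselClifford (n : ℕ) (x : ℝ) :
    besselJ n x = (x / 2) ^ n * besselClifford n (-(x / 2) ^ 2) := by
  rw [besselJ, besselClifford, ← tsum_mul_left]
  refine tsum_congr fun k => ?_
  rw [neg_pow ((x / 2) ^ 2), pow_add, pow_mul]
  ring

theorem besselJ_zero_zero : besselJ 0 0 = 1 := by
  simp [besselJ_eq_pow_mul_besselClifford, besselClifford_zero_right]

theorem hasDerivAt_besselClifford_neg_sq (n : ℕ) (x : ℝ) :
    HasDerivAt (fun x : ℝ => besselClifford n (-(x / 2) ^ 2))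
      (-(x / 2) * besselClifford (n + 1) (-(x / 2) ^ 2)) x := by
  have hasDerivAt_neg_sq : HasDerivAt (fun x : ℝ => -(x / 2) ^ 2) (-(x / 2)) x :=
    (((hasDerivAt_id x).div_const 2).pow 2).neg.congr_deriv <| by
      simp only [id_eq, Nat.cast_ofNat, Nat.add_one_sub_one, pow_one]
      ring
  exact ((hasDerivAt_besselClifford n _).comp x hasDerivAt_neg_sq).congr_deriv (mul_comm _ _)

theorem hasDerivAt_besselJ_zero (x : ℝ) : HasDerivAt (besselJ 0) (-besselJ 1 x) x := by
  have besselJ_zero_eq : besselJ 0 = fun x : ℝ => besselClifford 0 (-(x / 2) ^ 2) := by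
    ext x
    rw [besselJ_eq_pow_mul_besselClifford, pow_zero, one_mul]
  rw [besselJ_zero_eq, besselJ_eq_pow_mul_besselClifford, pow_one, ← neg_mul]
  exact hasDerivAt_besselClifford_neg_sq 0 x

theorem besselJ_recurrence (n : ℕ) (x : ℝ) :
    x * (besselJ n x + besselJ (n + 2) x) = 2 * (n + 1) * besselJ (n + 1) x := by
  simp only [besselJ_eq_pow_mul_besselClifford]
  rw [← besselClifford_recurrence n]
  ring

theorem hasDerivAt_besselJ_succ (n : ℕ) (x : ℝ) :
    HasDerivAt (besselJ (n + 1)) ((besselJ n x - besselJ (n + 2) x) / 2) x := by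
  have hasDerivAt_pow_half : HasDerivAt (fun x : ℝ => (x / 2) ^ (n + 1))
      ((n + 1) * (x / 2) ^ n / 2) x :=
    (((hasDerivAt_id x).div_const 2).pow (n + 1)).congr_deriv <| by
      simp only [id_eq, Nat.cast_add, Nat.cast_one, Nat.add_sub_cancel]
      ring
  rw [funext (besselJ_eq_pow_mul_besselClifford (n + 1))]
  refine (hasDerivAt_pow_half.mul (hasDerivAt_besselClifford_neg_sq (n + 1) x)).congr_deriv ?_
  simp only [besselJ_eq_pow_mul_besselClifford]
  rw [← besselClifford_recurrence n]
  ring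

theorem continuous_besselJ (n : ℕ) : Continuous (besselJ n) := by
  rw [continuous_iff_continuousAt]
  intro x
  cases n with
  | zero => exact (hasDerivAt_besselJ_zero x).continuousAt
  | succ n => exact (hasDerivAt_besselJ_succ n x).continuousAt

theorem hasDerivAt_besselJ_one {x : ℝ} (hx : x ≠ 0) :
    HasDerivAt (besselJ 1) (besselJ 0 x - besselJ 1 x / x) x := by
  refine (hasDerivAt_besselJ_succ 0 x).congr_deriv ?_
  have recurrence := besselJ_recurrence 0 x
  simp only [zero_add, Nat.cast_zero, mul_one] at recurrence ⊢
  field_simp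
  linear_combination -recurrence

/-- The energy `(du/dt) ^ 2 + (1 + 1 / (4 * t ^ 2)) * u ^ 2` of `u = √t * J_0(t)`, a solution of
`d²u/dt² + (1 + 1 / (4 * t ^ 2)) * u = 0`, written out using `dJ_0/dt = -J_1`. It bounds `J_0` and
`J_1` at infinity because it decreases. -/
noncomputable def besselEnergy (t : ℝ) : ℝ :=
  t * (besselJ 0 t ^ 2 + besselJ 1 t ^ 2) - besselJ 0 t * besselJ 1 t + besselJ 0 t ^ 2 / (2 * t)

theorem hasDerivAt_besselEnergy {t : ℝ} (ht : t ≠ 0) :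
    HasDerivAt besselEnergy (-(besselJ 0 t ^ 2 / (2 * t ^ 2))) t := by
  have h₀ := hasDerivAt_besselJ_zero t
  have h₁ := hasDerivAt_besselJ_one ht
  refine ((((hasDerivAt_id t).mul ((h₀.pow 2).add (h₁.pow 2))).sub (h₀.mul h₁)).add
    ((h₀.pow 2).div ((hasDerivAt_id t).const_mul 2)
      (mul_ne_zero two_ne_zero ht))).congr_deriv ?_
  simp only [Pi.add_apply, Pi.pow_apply, id_eq, Nat.cast_ofNat, Nat.add_one_sub_one, pow_one,
    one_mul, mul_one]
  field_simp
  ring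

theorem antitoneOn_besselEnergy : AntitoneOn besselEnergy (Set.Ioi 0) := by
  have hasDerivAt_energy {t : ℝ} (ht : t ∈ Set.Ioi (0 : ℝ)) := hasDerivAt_besselEnergy (ne_of_gt ht)
  refine antitoneOn_of_hasDerivWithinAt_nonpos (convex_Ioi 0)
    (fun t ht => (hasDerivAt_energy ht).continuousAt.continuousWithinAt)
    (fun t ht => (hasDerivAt_energy (interior_subset ht)).hasDerivWithinAt) fun t _ => ?_
  exact neg_nonpos.2 (by positivity)

theorem half_mul_sq_add_sq_le_besselEnergy {t : ℝ} (ht : 0 < t) :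
    t / 2 * (besselJ 0 t ^ 2 + besselJ 1 t ^ 2) ≤ besselEnergy t := by
  have energy_sub_eq :
      besselEnergy t - t / 2 * (besselJ 0 t ^ 2 + besselJ 1 t ^ 2) =
        t / 2 * besselJ 0 t ^ 2 + (t * besselJ 1 t - besselJ 0 t) ^ 2 / (2 * t) := by
    rw [besselEnergy]
    field_simp
    ring
  rw [← sub_nonneg, energy_sub_eq]
  positivity

theorem isBigO_besselJ_sq_add_sq :
    (fun t => besselJ 0 t ^ 2 + besselJ 1 t ^ 2) =O[atTop] fun t : ℝ => t⁻¹ := by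
  refine .of_bound (2 * besselEnergy 1) ?_
  filter_upwards [eventually_ge_atTop 1] with t one_le
  have pos : 0 < t := one_pos.trans_le one_le
  have energy_le : t / 2 * (besselJ 0 t ^ 2 + besselJ 1 t ^ 2) ≤ besselEnergy 1 :=
    (half_mul_sq_add_sq_le_besselEnergy pos).trans
      (antitoneOn_besselEnergy (Set.mem_Ioi.2 one_pos) (Set.mem_Ioi.2 pos) one_le)
  rw [norm_of_nonneg (by positivity), norm_of_nonneg (by positivity), ← div_eq_mul_inv,
    le_div_iff₀ pos]
  linarith

theorem isBigO_rpow_neg_half_of_sq {f : ℝ → ℝ}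
    (hf : (fun t => f t ^ 2) =O[atTop] fun t : ℝ => t⁻¹) :
    f =O[atTop] fun t : ℝ => t ^ (-1 / 2 : ℝ) := by
  have inv_eq_sq : (fun t : ℝ => t⁻¹) =ᶠ[atTop] (fun t : ℝ => t ^ (-1 / 2 : ℝ)) ^ 2 := by
    filter_upwards [eventually_ge_atTop 0] with t ht
    rw [Pi.pow_apply, ← rpow_mul_natCast ht]
    norm_num [rpow_neg_one]
  exact .of_pow two_ne_zero (hf.trans_eventuallyEq inv_eq_sq)

theorem isBigO_besselJ (n : ℕ) : besselJ n =O[atTop] fun t : ℝ => t ^ (-1 / 2 : ℝ) := by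
  induction n using Nat.twoStepInduction with
  | zero =>
    refine isBigO_rpow_neg_half_of_sq (.trans (.of_norm_le fun t => ?_) isBigO_besselJ_sq_add_sq)
    rw [norm_of_nonneg (sq_nonneg _)]
    exact le_add_of_nonneg_right (sq_nonneg _)
  | one =>
    refine isBigO_rpow_neg_half_of_sq (.trans (.of_norm_le fun t => ?_) isBigO_besselJ_sq_add_sq)
    rw [norm_of_nonneg (sq_nonneg _)]
    exact le_add_of_nonneg_left (sq_nonneg _)
  | more n ih ih_succ =>
    have recurrence : (fun t => 2 * (n + 1) * (t⁻¹ * besselJ (n + 1) t) - besselJ n t)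
        =ᶠ[atTop] besselJ (n + 2) := by
      filter_upwards [eventually_ne_atTop 0] with t ht
      field_simp
      linear_combination -besselJ_recurrence n t
    have isBigO_inv : (fun t : ℝ => t⁻¹) =O[atTop] fun _ => (1 : ℝ) :=
      tendsto_inv_atTop_zero.isBigO_one ℝ
    refine recurrence.symm.trans_isBigO (.sub (.const_mul_left ?_ _) ih)
    simpa using isBigO_inv.mul ih_succ

theorem tendsto_besselJ_atTop (n : ℕ) : Tendsto (besselJ n) atTop (𝓝 0) :=
  (isBigO_besselJ n).trans_tendsto <| by
    simpa only [neg_div] using tendsto_rpow_neg_atTop one_half_pos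

theorem isBigO_sinc : sinc =O[atTop] fun t : ℝ => t⁻¹ := by
  refine .of_bound 1 ?_
  filter_upwards [eventually_ne_atTop 0] with t ht
  rw [sinc_of_ne_zero ht, div_eq_mul_inv, norm_mul]
  gcongr
  exact abs_sin_le_one t

theorem integrableOn_besselJ_mul_sinc (n : ℕ) (a : ℝ) :
    IntegrableOn (fun t => besselJ n t * sinc t) (Set.Ici a) := by
  have continuous_integrand := (continuous_besselJ n).mul continuous_sinc
  have isBigO_integrand :
      (fun t => besselJ n t * sinc t) =O[atTop] fun t : ℝ => t ^ (-3 / 2 : ℝ) := by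
    refine ((isBigO_besselJ n).mul isBigO_sinc).trans_eventuallyEq ?_
    filter_upwards [eventually_gt_atTop 0] with t ht
    rw [← div_eq_mul_inv, ← rpow_sub_one ht.ne']
    norm_num
  exact (continuous_integrand.locallyIntegrable.locallyIntegrableOn _).integrableOn_of_isBigO_atTop
    isBigO_integrand (integrableAtFilter_rpow_atTop_iff.2 (by norm_num))

theorem hasDerivAt_neg_besselJ_zero_mul_cos_add_besselJ_one_mul_sin {t : ℝ} (ht : t ≠ 0) :
    HasDerivAt (fun t => -(besselJ 0 t * cos t + besselJ 1 t * sin t))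
      (besselJ 1 t * sinc t) t := by
  refine (((hasDerivAt_besselJ_zero t).mul (hasDerivAt_cos t)).add
    ((hasDerivAt_besselJ_one ht).mul (hasDerivAt_sin t))).neg.congr_deriv ?_
  rw [sinc_of_ne_zero ht]
  ring

theorem tendsto_neg_besselJ_zero_mul_cos_add_besselJ_one_mul_sin :
    Tendsto (fun t => -(besselJ 0 t * cos t + besselJ 1 t * sin t)) atTop (𝓝 0) := by
  have cos_bdd : IsBoundedUnder (· ≤ ·) atTop (norm ∘ cos) :=
    isBoundedUnder_of ⟨1, abs_cos_le_one⟩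
  have sin_bdd : IsBoundedUnder (· ≤ ·) atTop (norm ∘ sin) :=
    isBoundedUnder_of ⟨1, abs_sin_le_one⟩
  simpa using (((tendsto_besselJ_atTop 0).zero_mul_isBoundedUnder_le cos_bdd).add
    ((tendsto_besselJ_atTop 1).zero_mul_isBoundedUnder_le sin_bdd)).neg

theorem integral_besselJ_one_mul_sinc : ∫ t in Set.Ioi (0 : ℝ), besselJ 1 t * sinc t = 1 := by
  have continuous_antideriv : Continuous fun t => -(besselJ 0 t * cos t + besselJ 1 t * sin t) :=
    (((continuous_besselJ 0).mul continuous_cos).add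
      ((continuous_besselJ 1).mul continuous_sin)).neg
  rw [integral_Ioi_of_hasDerivAt_of_tendsto continuous_antideriv.continuousWithinAt
    (fun t ht => hasDerivAt_neg_besselJ_zero_mul_cos_add_besselJ_one_mul_sin (ne_of_gt ht))
    ((integrableOn_besselJ_mul_sinc 1 0).mono_set Set.Ioi_subset_Ici_self)
    tendsto_neg_besselJ_zero_mul_cos_add_besselJ_one_mul_sin]
  simp [besselJ_zero_zero]

theorem inv_Gamma_one_add_mul_Gamma_one_sub (x : ℝ) :
    (Real.Gamma (1 + x) * Real.Gamma (1 - x))⁻¹ = sinc (π * x) := by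
  obtain rfl | hx := eq_or_ne x 0
  · simp
  · -- At a nonzero integer `x` one Gamma factor takes the junk value `0` at its pole,
    -- and `0⁻¹ = 0 = sinc (π * x)`.
    rw [add_comm, Gamma_add_one hx, mul_assoc, Gamma_mul_Gamma_one_sub,
      sinc_of_ne_zero (mul_ne_zero pi_ne_zero hx), ← mul_div_assoc, inv_div, mul_comm x]

theorem hankel_gamma_special_case_J1 :
    ∫ x in Set.Ioi (0 : ℝ),
        besselJ 1 (π * x) * (Real.Gamma (1 + x) * Real.Gamma (1 - x))⁻¹ = 1 / π := by
  simp only [inv_Gamma_one_add_mul_Gamma_one_sub]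
  rw [integral_comp_mul_left_Ioi (fun t => besselJ 1 t * sinc t) 0 pi_pos, mul_zero,
    integral_besselJ_one_mul_sinc, smul_eq_mul, mul_one, one_div]
end

section
/- Let α, β > 0 be real numbers. Then the fourth derivative at x = 0 of the function g(x) = 1/(Γ(α + βx)·Γ(α − βx)) satisfies a_2^{(1)} = g''''(0) = (β^4 / Γ(α)^2) · [12·(ψ^{(1)}(α))² − 2·ψ^{(3)}(α)], where ψ^{(1)} and ψ^{(3)} denote the first and third derivatives of the digamma function ψ = Γ'/Γ. -/
open Real

/-- The digamma function `ψ = Γ'/Γ`. -/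
noncomputable def digamma (x : ℝ) : ℝ := deriv Real.Gamma x / Real.Gamma x

/-- The `n`-th polygamma function, the `n`-th derivative of the digamma function. -/
noncomputable def polygamma (n : ℕ) (x : ℝ) : ℝ := iteratedDeriv n digamma x

/-!
Since `1/Γ` is entire, so is the even function `f t = 1/(Γ (α + t) Γ (α - t))`, and
`g x = f (β x)`. Near `0` its logarithmic derivative is `L t = ψ (α - t) - ψ (α + t)`, so
`L'(0) = -2ψ'(α)` and `L'''(0) = -2ψ'''(α)`. Leibniz' rule applied to `f' = f L`, together with
the vanishing of the odd derivatives of `f` at `0`, gives `f''(0) = f(0) L'(0)` and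
`f''''(0) = f(0) (3 L'(0)² + L'''(0))`.
-/

section IteratedDeriv

variable {𝕜 𝕜' : Type*} [NontriviallyNormedField 𝕜] [NontriviallyNormedField 𝕜']
  [NormedAlgebra 𝕜 𝕜']

lemma logDeriv_fun_inv (f : 𝕜 → 𝕜') : logDeriv (fun x => (f x)⁻¹) = -logDeriv f := by
  ext x
  simp only [Pi.neg_apply]
  by_cases hfx : f x = 0
  · simp only [logDeriv_apply, hfx, inv_zero, div_zero, neg_zero]
  by_cases hf : DifferentiableAt 𝕜 f x
  · rw [logDeriv_apply, logDeriv_apply, deriv_fun_inv'' hf hfx]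
    field_simp
  · have hf_inv : ¬DifferentiableAt 𝕜 (fun y => (f y)⁻¹) x := fun h =>
      hf (by simpa only [inv_inv] using h.fun_inv (inv_ne_zero hfx))
    rw [logDeriv_eq_zero_of_not_differentiableAt _ x hf,
      logDeriv_eq_zero_of_not_differentiableAt _ x hf_inv, neg_zero]

lemma contDiffAt_logDeriv {f : 𝕜 → 𝕜'} {x : 𝕜} {n : WithTop ℕ∞}
    (hf : ContDiffAt 𝕜 (n + 1) f x) (hfx : f x ≠ 0) : ContDiffAt 𝕜 n (logDeriv f) x := by
  rw [logDeriv, div_eq_mul_inv]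
  exact (hf.derivWithin le_rfl).mul ((hf.of_le le_self_add).inv hfx)

lemma iteratedDeriv_succ_eq_sum_mul_logDeriv {f : 𝕜 → 𝕜'} {x : 𝕜} {n : ℕ}
    (hf : ContDiffAt 𝕜 (n + 1) f x) (hfx : f x ≠ 0) :
    iteratedDeriv (n + 1) f x = ∑ i ∈ Finset.range (n + 1),
      n.choose i * iteratedDeriv i f x * iteratedDeriv (n - i) (logDeriv f) x := by
  have hderiv : deriv f =ᶠ[nhds x] f * logDeriv f := by
    filter_upwards [hf.continuousAt.eventually_ne hfx] with y hy
    rw [Pi.mul_apply, logDeriv_apply, mul_div_cancel₀ _ hy]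
  rw [iteratedDeriv_succ', hderiv.iteratedDeriv_eq,
    iteratedDeriv_mul (hf.of_le le_self_add) (contDiffAt_logDeriv hf hfx)]

lemma iteratedDeriv_zero_of_even_of_odd {F : Type*} [NormedAddCommGroup F] [NormedSpace 𝕜 F]
    [IsAddTorsionFree F] {f : 𝕜 → F} (hf : f.Even) {n : ℕ} (hn : Odd n) :
    iteratedDeriv n f 0 = 0 := by
  have h := iteratedDeriv_comp_neg n f 0
  rw [funext hf, hn.neg_one_pow, neg_one_smul, neg_zero] at h
  exact self_eq_neg.mp h

lemma iteratedDeriv_four_zero_of_even [CharZero 𝕜'] {f : 𝕜 → 𝕜'} (hf : f.Even)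
    (hf_diff : ContDiffAt 𝕜 4 f 0) (hf₀ : f 0 ≠ 0) :
    iteratedDeriv 4 f 0 = f 0 * (3 * iteratedDeriv 1 (logDeriv f) 0 ^ 2
      + iteratedDeriv 3 (logDeriv f) 0) := by
  have h₁ : iteratedDeriv 1 f 0 = 0 := iteratedDeriv_zero_of_even_of_odd hf (by decide)
  have h₃ : iteratedDeriv 3 f 0 = 0 := iteratedDeriv_zero_of_even_of_odd hf (by decide)
  have h₂ : iteratedDeriv 2 f 0 = f 0 * iteratedDeriv 1 (logDeriv f) 0 := by
    simpa [Finset.sum_range_succ, h₁] using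
      iteratedDeriv_succ_eq_sum_mul_logDeriv (n := 1) (hf_diff.of_le (by norm_num)) hf₀
  have h₄ : iteratedDeriv 4 f 0 = f 0 * iteratedDeriv 3 (logDeriv f) 0
      + 3 * iteratedDeriv 2 f 0 * iteratedDeriv 1 (logDeriv f) 0 := by
    simpa [Finset.sum_range_succ, h₁, h₃, Nat.choose] using
      iteratedDeriv_succ_eq_sum_mul_logDeriv (n := 3) (hf_diff.of_le (by norm_num)) hf₀
  rw [h₄, h₂]
  ring

lemma logDeriv_mul_reflect {u : 𝕜 → 𝕜'} {a t : 𝕜} (hadd : DifferentiableAt 𝕜 u (a + t))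
    (hsub : DifferentiableAt 𝕜 u (a - t)) (hadd_ne : u (a + t) ≠ 0) (hsub_ne : u (a - t) ≠ 0) :
    logDeriv (fun s => u (a + s) * u (a - s)) t = logDeriv u (a + t) - logDeriv u (a - t) := by
  rw [logDeriv_mul t hadd_ne hsub_ne (by fun_prop) (by fun_prop)]
  simp only [logDeriv_apply, deriv_comp_const_add, deriv_comp_const_sub, neg_div,
    ← sub_eq_add_neg]

lemma iteratedDeriv_logDeriv_mul_reflect {u : 𝕜 → 𝕜'} {a : 𝕜} {n : ℕ}
    (hu : ContDiffAt 𝕜 (n + 1) u a) (hua : u a ≠ 0) :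
    iteratedDeriv n (logDeriv fun t => u (a + t) * u (a - t)) 0
      = (1 - (-1) ^ n) * iteratedDeriv n (logDeriv u) a := by
  have hlog : (logDeriv fun t => u (a + t) * u (a - t)) =ᶠ[nhds 0]
      fun t => logDeriv u (a + t) - logDeriv u (a - t) := by
    have hu_near : ∀ᶠ y in nhds a, DifferentiableAt 𝕜 u y ∧ u y ≠ 0 :=
      ((hu.eventually (by simp)).mono fun y hy => hy.differentiableAt (by simp)).and
        (hu.continuousAt.eventually_ne hua)
    have hadd : Filter.Tendsto (fun t => a + t) (nhds 0) (nhds a) := by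
      simpa using (continuous_const_add a).tendsto 0
    have hsub : Filter.Tendsto (fun t => a - t) (nhds 0) (nhds a) := by
      simpa using (continuous_sub_left a).tendsto 0
    filter_upwards [hadd.eventually hu_near, hsub.eventually hu_near]
      with t ⟨hdiff_add, hne_add⟩ ⟨hdiff_sub, hne_sub⟩
    exact logDeriv_mul_reflect hdiff_add hdiff_sub hne_add hne_sub
  have hL : ContDiffAt 𝕜 n (logDeriv u) a := contDiffAt_logDeriv hu hua
  have hL_add : ContDiffAt 𝕜 n (fun t => logDeriv u (a + t)) 0 :=
    ContDiffAt.comp (g := logDeriv u) 0 (by simpa using hL) (by fun_prop)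
  have hL_sub : ContDiffAt 𝕜 n (fun t => logDeriv u (a - t)) 0 :=
    ContDiffAt.comp (g := logDeriv u) 0 (by simpa using hL) (by fun_prop)
  rw [hlog.iteratedDeriv_eq, iteratedDeriv_fun_sub hL_add hL_sub, iteratedDeriv_comp_const_add,
    iteratedDeriv_comp_const_sub]
  simp [sub_mul, Algebra.smul_def]

theorem iteratedDeriv_four_mul_reflect [CharZero 𝕜'] {u : 𝕜 → 𝕜'} {a : 𝕜}
    (hu : ContDiffAt 𝕜 4 u a) (hua : u a ≠ 0) :
    iteratedDeriv 4 (fun t => u (a + t) * u (a - t)) 0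
      = u a ^ 2 * (12 * iteratedDeriv 1 (logDeriv u) a ^ 2
        + 2 * iteratedDeriv 3 (logDeriv u) a) := by
  have heven : (fun t => u (a + t) * u (a - t)).Even := fun t => by
    simp only [sub_neg_eq_add, ← sub_eq_add_neg, mul_comm]
  have hdiff : ContDiffAt 𝕜 4 (fun t => u (a + t) * u (a - t)) 0 :=
    (ContDiffAt.comp (g := u) 0 (by simpa using hu) (by fun_prop)).mul
      (ContDiffAt.comp (g := u) 0 (by simpa using hu) (by fun_prop))
  rw [iteratedDeriv_four_zero_of_even heven hdiff (by simpa using hua),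
    iteratedDeriv_logDeriv_mul_reflect (n := 1) (hu.of_le (by norm_num)) hua,
    iteratedDeriv_logDeriv_mul_reflect (n := 3) (hu.of_le (by norm_num)) hua]
  simp only [add_zero, sub_zero]
  ring

end IteratedDeriv

lemma contDiff_inv_Gamma {n : WithTop ℕ∞} : ContDiff ℝ n fun x : ℝ => (Gamma x)⁻¹ := by
  have h := (Complex.differentiable_one_div_Gamma.contDiff (n := n)).real_of_complex
  simpa only [Complex.Gamma_ofReal, ← Complex.ofReal_inv, Complex.ofReal_re] using h

lemma logDeriv_inv_Gamma : logDeriv (fun x : ℝ => (Gamma x)⁻¹) = -digamma :=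
  logDeriv_fun_inv Gamma

theorem gammaProd_fourth_deriv_at_zero_general (α β : ℝ) (hα : ∀ m : ℕ, α ≠ -m) :
    iteratedDeriv 4 (fun x : ℝ => (Real.Gamma (α + β * x) * Real.Gamma (α - β * x))⁻¹) 0
      = (β ^ 4 / (Real.Gamma α) ^ 2)
          * (12 * (polygamma 1 α) ^ 2 - 2 * polygamma 3 α) := by
  have hsmooth : ContDiff ℝ 4 fun t => (Gamma (α + t))⁻¹ * (Gamma (α - t))⁻¹ :=
    (contDiff_inv_Gamma.comp (contDiff_const.add contDiff_id)).mul
      (contDiff_inv_Gamma.comp (contDiff_const.sub contDiff_id))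
  have hlog (n : ℕ) : iteratedDeriv n (logDeriv fun x => (Gamma x)⁻¹) α = -polygamma n α := by
    rw [logDeriv_inv_Gamma, iteratedDeriv_neg, polygamma]
  calc iteratedDeriv 4 (fun x : ℝ => (Gamma (α + β * x) * Gamma (α - β * x))⁻¹) 0
      = β ^ 4 * iteratedDeriv 4 (fun t => (Gamma (α + t))⁻¹ * (Gamma (α - t))⁻¹) 0 := by
        simpa only [mul_inv, mul_zero] using congrFun (iteratedDeriv_comp_const_mul hsmooth β) 0
    _ = β ^ 4 * ((Gamma α)⁻¹ ^ 2 * (12 * (-polygamma 1 α) ^ 2 + 2 * -polygamma 3 α)) := by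
        rw [← hlog, ← hlog, ← iteratedDeriv_four_mul_reflect contDiff_inv_Gamma.contDiffAt
          (inv_ne_zero (Gamma_ne_zero hα))]
    _ = β ^ 4 / Gamma α ^ 2 * (12 * polygamma 1 α ^ 2 - 2 * polygamma 3 α) := by ring

theorem gammaProd_fourth_deriv_at_zero (α β : ℝ) (hα : 0 < α) (hβ : 0 < β) :
    iteratedDeriv 4 (fun x : ℝ => (Real.Gamma (α + β * x) * Real.Gamma (α - β * x))⁻¹) 0
      = (β ^ 4 / (Real.Gamma α) ^ 2)
          * (12 * (polygamma 1 α) ^ 2 - 2 * polygamma 3 α) :=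
  gammaProd_fourth_deriv_at_zero_general α β fun m =>
    ((neg_nonpos.mpr m.cast_nonneg).trans_lt hα).ne'
end
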